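/- Let R be a Cohen-Macaulay ring (i.e., R_p is a Cohen-Macaulay local ring for every prime p), X a resolving subcategory of mod R, and M a finitely generated R-module such that X is dominant on NF(M). Then the following are equivalent: (1) M belongs to X; (2) depth M_p ≥ min_{X∈X} depth X_p holds for all p ∈ NF(M). -/

import Mathlib

universe u

open CategoryTheory

namespace ResolvPaper

variable (R : Type u) [CommRing R]

/-- `IsSES f g` means `0 → A → B → C → 0` is a short exact sequence. -/
def IsSES {R : Type u} [CommRing R] {A B C : Type u} [AddCommGroup A] [Module R A]
    [AddCommGroup B] [Module R B] [AddCommGroup C] [Module R C]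
    (f : A →ₗ[R] B) (g : B →ₗ[R] C) : Prop :=
  Function.Injective f ∧ Function.Surjective g ∧ LinearMap.range f = LinearMap.ker g

/-- A resolving subcategory of `mod R`, viewed as a set of bundled modules
closed under isomorphism, containing the finitely generated projective modules, and closed
under direct summands, extensions and syzygies. -/
structure IsResolving (𝒳 : Set (ModuleCat.{u} R)) : Prop where
  fg : ∀ M ∈ 𝒳, Module.Finite R M
  iso_closed : ∀ M N : ModuleCat.{u} R, Nonempty (M ≃ₗ[R] N) → M ∈ 𝒳 → N ∈ 𝒳
  proj_mem : ∀ M : ModuleCat.{u} R, Module.Finite R M → Module.Projective R M → M ∈ 𝒳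
  summand_closed : ∀ M N : ModuleCat.{u} R, ModuleCat.of R (↥M × ↥N) ∈ 𝒳 → M ∈ 𝒳
  ext_closed : ∀ (A B C : ModuleCat.{u} R) (f : A →ₗ[R] B) (g : B →ₗ[R] C),
    IsSES f g → A ∈ 𝒳 → C ∈ 𝒳 → B ∈ 𝒳
  syzygy_closed : ∀ (K P M : ModuleCat.{u} R) (f : K →ₗ[R] P) (g : P →ₗ[R] M),
    IsSES f g → Module.Finite R K → Module.Finite R P → Module.Projective R P →
    M ∈ 𝒳 → K ∈ 𝒳

/-- The resolving closure: the smallest resolving subcategory containing `S`. -/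
def resClosure (S : Set (ModuleCat.{u} R)) : Set (ModuleCat.{u} R) :=
  ⋂₀ {𝒳 | IsResolving R 𝒳 ∧ S ⊆ 𝒳}

/-- An extension-closed subcategory of `mod R`: closed under isomorphism,
direct summands and extensions. -/
def IsExtClosed (𝒳 : Set (ModuleCat.{u} R)) : Prop :=
  (∀ M N : ModuleCat.{u} R, Nonempty (M ≃ₗ[R] N) → M ∈ 𝒳 → N ∈ 𝒳) ∧
  (∀ M N : ModuleCat.{u} R, ModuleCat.of R (↥M × ↥N) ∈ 𝒳 → M ∈ 𝒳) ∧
  (∀ (A B C : ModuleCat.{u} R) (f : A →ₗ[R] B) (g : B →ₗ[R] C),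
    IsSES f g → A ∈ 𝒳 → C ∈ 𝒳 → B ∈ 𝒳)

/-- The extension closure of a set of modules. -/
def extClosure (S : Set (ModuleCat.{u} R)) : Set (ModuleCat.{u} R) :=
  ⋂₀ {𝒳 | IsExtClosed R 𝒳 ∧ S ⊆ 𝒳}

/-- `add R`: direct summands of finite free modules. -/
def addR : Set (ModuleCat.{u} R) :=
  {M | ∃ (n : ℕ) (N : ModuleCat.{u} R), Nonempty ((↥M × ↥N) ≃ₗ[R] (Fin n → R))}

/-- `pdLE n M` : the projective dimension of `M` is at most `n`. -/
def pdLE : ℕ → ModuleCat.{u} R → Prop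
  | 0, M => Module.Projective R M
  | n+1, M => ∃ (K P : ModuleCat.{u} R) (f : K →ₗ[R] P) (g : P →ₗ[R] M),
      Module.Finite R P ∧ Module.Projective R P ∧ IsSES f g ∧ pdLE n K

/-- The projective dimension, an element of `WithBot ℕ∞`; the zero module
has projective dimension `⊥ = -∞`. -/
noncomputable def pdim (M : ModuleCat.{u} R) : WithBot ℕ∞ :=
  sInf {x : WithBot ℕ∞ | (x = ⊥ ∧ Subsingleton M) ∨ ∃ n : ℕ, x = (n : ℕ∞) ∧ pdLE R n M}

/-- The depth of `M` with respect to the ideal `I`: the supremum of lengths of weakly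
`M`-regular sequences contained in `I`.  The zero module has depth `∞`. -/
noncomputable def depthE (I : Ideal R) (M : Type u) [AddCommGroup M] [Module R M] : ℕ∞ :=
  sSup {x : ℕ∞ | ∃ rs : List R, (∀ r ∈ rs, r ∈ I) ∧
    RingTheory.Sequence.IsWeaklyRegular M rs ∧ x = rs.length}

/-- The grade of an ideal: the length of a maximal `R`-regular sequence in `I`. -/
noncomputable def gradeE (I : Ideal R) : ℕ∞ := depthE R I R

/-- A grade consistent function on `Spec R`. -/
def GradeConsistent (f : PrimeSpectrum R → ℕ) : Prop :=
  (∀ p : PrimeSpectrum R, (f p : ℕ∞) ≤ gradeE R p.asIdeal) ∧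
  (∀ p q : PrimeSpectrum R, p.asIdeal ≤ q.asIdeal → f p ≤ f q)

/-- The localization of a module at a prime, as a module over the local ring `R_p`. -/
noncomputable abbrev localizeM (p : PrimeSpectrum R) (M : ModuleCat.{u} R) :
    ModuleCat.{u} (Localization.AtPrime p.asIdeal) :=
  ModuleCat.of (Localization.AtPrime p.asIdeal) (LocalizedModule p.asIdeal.primeCompl M)

/-- `pd_{R_p} M_p`. -/
noncomputable def localPdim (p : PrimeSpectrum R) (M : ModuleCat.{u} R) : WithBot ℕ∞ :=
  pdim (Localization.AtPrime p.asIdeal) (localizeM R p M)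

/-- `depth_{R_p} M_p`. -/
noncomputable def localDepth (p : PrimeSpectrum R) (M : ModuleCat.{u} R) : ℕ∞ :=
  depthE (Localization.AtPrime p.asIdeal)
    (IsLocalRing.maximalIdeal (Localization.AtPrime p.asIdeal))
    (LocalizedModule p.asIdeal.primeCompl M)

/-- The height of a prime ideal. -/
noncomputable def heightE (p : PrimeSpectrum R) : ℕ∞ := Order.height p

/-- `PD(R)` : finitely generated modules of finite projective dimension. -/
def PDcat : Set (ModuleCat.{u} R) :=
  {M | Module.Finite R M ∧ ∃ n : ℕ, pdLE R n M}

/-- `MCM(R)` : maximal Cohen-Macaulay modules. -/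
def MCMcat : Set (ModuleCat.{u} R) :=
  {M | Module.Finite R M ∧ ∀ p : PrimeSpectrum R, heightE R p ≤ localDepth R p M}

/-- The nonfree locus of a module. -/
def NF (M : ModuleCat.{u} R) : Set (PrimeSpectrum R) :=
  {p | ¬ Module.Free (Localization.AtPrime p.asIdeal) (LocalizedModule p.asIdeal.primeCompl M)}

/-- The infinite projective dimension locus of a module. -/
def IPD (M : ModuleCat.{u} R) : Set (PrimeSpectrum R) :=
  {p | localPdim R p M = (⊤ : WithBot ℕ∞)}

/-- The infinite projective dimension locus of a collection of modules. -/
def IPDcat (𝒳 : Set (ModuleCat.{u} R)) : Set (PrimeSpectrum R) :=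
  ⋃ M ∈ 𝒳, IPD R M

/-- The modules in `mod R` whose infinite projective dimension locus lies in `W`. -/
def IPDinv (W : Set (PrimeSpectrum R)) : Set (ModuleCat.{u} R) :=
  {M | Module.Finite R M ∧ IPD R M ⊆ W}

/-- A specialization closed subset of `Spec R`. -/
def SpecClosed (W : Set (PrimeSpectrum R)) : Prop :=
  ∀ p ∈ W, ∀ q : PrimeSpectrum R, p.asIdeal ≤ q.asIdeal → q ∈ W

/-- Membership in `add 𝒳_p`: direct summands of localizations of finite direct sums
of members of `𝒳`. -/
def memAddLocal (𝒳 : Set (ModuleCat.{u} R)) (p : PrimeSpectrum R)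
    (N : ModuleCat.{u} (Localization.AtPrime p.asIdeal)) : Prop :=
  ∃ (n : ℕ) (X : Fin n → ModuleCat.{u} R), (∀ i, X i ∈ 𝒳) ∧
    ∃ (N' : ModuleCat.{u} (Localization.AtPrime p.asIdeal)),
      Nonempty ((↥N × ↥N') ≃ₗ[Localization.AtPrime p.asIdeal]
        ((i : Fin n) → LocalizedModule p.asIdeal.primeCompl (X i)))

/-- `K` is an `n`-th syzygy of `M` computed from a minimal free resolution over the
local ring `S`. -/
def IsMinSyz (S : Type u) [CommRing S] [IsLocalRing S] :
    ℕ → ModuleCat.{u} S → ModuleCat.{u} S → Prop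
  | 0, M, K => Nonempty (K ≃ₗ[S] M)
  | n+1, M, K => ∃ (F : ModuleCat.{u} S) (g : F →ₗ[S] M) (K' : ModuleCat.{u} S)
      (i : K' →ₗ[S] F),
      Module.Finite S F ∧ Module.Free S F ∧ Function.Surjective g ∧
      (LinearMap.ker g ≤ (IsLocalRing.maximalIdeal S) • (⊤ : Submodule S F)) ∧
      Function.Injective i ∧ LinearMap.range i = LinearMap.ker g ∧
      IsMinSyz S n K' K

/-- `K` is an `n`-th syzygy of `M` in some projective resolution (over any ring). -/
def IsSyz : ℕ → ModuleCat.{u} R → ModuleCat.{u} R → Prop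
  | 0, M, K => Nonempty (K ≃ₗ[R] M)
  | n+1, M, K => ∃ (F : ModuleCat.{u} R) (g : F →ₗ[R] M) (K' : ModuleCat.{u} R)
      (i : K' →ₗ[R] F),
      Module.Finite R F ∧ Module.Projective R F ∧ Function.Surjective g ∧
      Function.Injective i ∧ LinearMap.range i = LinearMap.ker g ∧
      IsSyz n K' K

/-- `T` is (isomorphic to) the Auslander transpose of `M`, computed from a minimal
free presentation over the local ring `S`. -/
def IsTranspose (S : Type u) [CommRing S] [IsLocalRing S] (M T : ModuleCat.{u} S) : Prop :=
  ∃ (F1 F0 : ModuleCat.{u} S) (d : F1 →ₗ[S] F0) (e : F0 →ₗ[S] M),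
    Module.Finite S F0 ∧ Module.Free S F0 ∧ Module.Finite S F1 ∧ Module.Free S F1 ∧
    Function.Surjective e ∧ LinearMap.range d = LinearMap.ker e ∧
    LinearMap.ker e ≤ (IsLocalRing.maximalIdeal S) • (⊤ : Submodule S F0) ∧
    LinearMap.ker d ≤ (IsLocalRing.maximalIdeal S) • (⊤ : Submodule S F1) ∧
    Nonempty (T ≃ₗ[S] ((Module.Dual S F1) ⧸ LinearMap.range d.dualMap))

/-- `T` is (isomorphic to) `Tr Ω^n M` over the local ring `S`. -/
def IsTrOmega (S : Type u) [CommRing S] [IsLocalRing S] (n : ℕ) (M T : ModuleCat.{u} S) :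
    Prop :=
  ∃ K : ModuleCat.{u} S, IsMinSyz S n M K ∧ IsTranspose S K T

/-- Resolving subcategory `𝒳` is dominant on `W ⊆ Spec R`. -/
def DominantOn (𝒳 : Set (ModuleCat.{u} R)) (W : Set (PrimeSpectrum R)) : Prop :=
  ∀ p ∈ W, ∃ (n : ℕ) (K : ModuleCat.{u} (Localization.AtPrime p.asIdeal)),
    IsMinSyz (Localization.AtPrime p.asIdeal) n
      (ModuleCat.of (Localization.AtPrime p.asIdeal)
        (IsLocalRing.ResidueField (Localization.AtPrime p.asIdeal))) K ∧
    memAddLocal R 𝒳 p K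

/-- Dominant resolving subcategory. -/
def Dominant (𝒳 : Set (ModuleCat.{u} R)) : Prop := DominantOn R 𝒳 Set.univ

/-- A (noetherian) local ring is Cohen-Macaulay if its depth equals its Krull dimension. -/
def IsCMLocalRing (S : Type u) [CommRing S] [IsLocalRing S] : Prop :=
  IsNoetherianRing S ∧
    ((depthE S (IsLocalRing.maximalIdeal S) S : WithBot ℕ∞) = ringKrullDim S)

/-- A regular local ring: a noetherian local ring whose maximal ideal is generated by
`dim S` elements. -/
def IsRegLocalRing (S : Type u) [CommRing S] [IsLocalRing S] : Prop :=
  IsNoetherianRing S ∧ ∃ s : Finset S,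
    Ideal.span (s : Set S) = IsLocalRing.maximalIdeal S ∧
    ringKrullDim S = (s.card : WithBot ℕ∞)

/-- The singular locus of `R`. -/
def SingLocus : Set (PrimeSpectrum R) :=
  {p | ¬ IsRegLocalRing (Localization.AtPrime p.asIdeal)}

/-- A hypersurface local ring: the completion is a quotient of a regular local ring by
one element. -/
def IsHypersurfaceLocalRing (S : Type u) [CommRing S] [IsLocalRing S] : Prop :=
  ∃ (T : Type u) (_ : CommRing T) (_ : IsLocalRing T) (f : T),
    IsRegLocalRing T ∧
    Nonempty ((AdicCompletion (IsLocalRing.maximalIdeal S) S) ≃+* (T ⧸ Ideal.span {f}))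

/-- A complete intersection local ring: the completion is a quotient of a regular local
ring by a regular sequence. -/
def IsCompleteIntersectionLocalRing (S : Type u) [CommRing S] [IsLocalRing S] : Prop :=
  ∃ (T : Type u) (_ : CommRing T) (_ : IsLocalRing T) (rs : List T),
    IsRegLocalRing T ∧ RingTheory.Sequence.IsRegular T rs ∧
    Nonempty ((AdicCompletion (IsLocalRing.maximalIdeal S) S) ≃+*
      (T ⧸ Ideal.ofList rs))

/-- The subquotient `A / (A ⊓ B)` of two submodules, used for homology. -/
def subquot {S M : Type u} [CommRing S] [AddCommGroup M] [Module S M]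
    (A B : Submodule S M) : Type u :=
  A ⧸ (B.comap A.subtype)

noncomputable instance {S M : Type u} [CommRing S] [AddCommGroup M] [Module S M]
    (A B : Submodule S M) : AddCommGroup (subquot A B) :=
  inferInstanceAs (AddCommGroup (A ⧸ (B.comap A.subtype)))

noncomputable instance {S M : Type u} [CommRing S] [AddCommGroup M] [Module S M]
    (A B : Submodule S M) : Module S (subquot A B) :=
  inferInstanceAs (Module S (A ⧸ (B.comap A.subtype)))

/-- `E` is (isomorphic to) `Ext^{j+1}_S(M, S)`, computed from a finite free resolution. -/
def IsExtPos (S : Type u) [CommRing S] (j : ℕ) (M E : ModuleCat.{u} S) : Prop :=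
  ∃ (F : ℕ → ModuleCat.{u} S) (d : ∀ i : ℕ, (F (i+1) : Type u) →ₗ[S] F i)
    (e : (F 0 : Type u) →ₗ[S] M),
    (∀ i, Module.Finite S (F i)) ∧ (∀ i, Module.Free S (F i)) ∧
    Function.Surjective e ∧ LinearMap.range (d 0) = LinearMap.ker e ∧
    (∀ i, LinearMap.range (d (i+1)) = LinearMap.ker (d i)) ∧
    Nonempty (E ≃ₗ[S]
      subquot (LinearMap.ker ((d (j+1)).dualMap)) (LinearMap.range ((d j).dualMap)))

/-- `T` is (isomorphic to) `Tor_n^S(M, N)`, computed from a projective resolution of `M`. -/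
def IsTor (S : Type u) [CommRing S] (n : ℕ) (M N T : ModuleCat.{u} S) : Prop :=
  ∃ (F : ℕ → ModuleCat.{u} S) (d : ∀ i : ℕ, (F (i+1) : Type u) →ₗ[S] F i)
    (e : (F 0 : Type u) →ₗ[S] M),
    (∀ i, Module.Projective S (F i)) ∧
    Function.Surjective e ∧ LinearMap.range (d 0) = LinearMap.ker e ∧
    (∀ i, LinearMap.range (d (i+1)) = LinearMap.ker (d i)) ∧
    (match n with
      | 0 => Nonempty (T ≃ₗ[S] TensorProduct S M N)
      | (j+1) => Nonempty (T ≃ₗ[S]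
          subquot (LinearMap.ker (LinearMap.rTensor (↥N) (d j)))
            (LinearMap.range (LinearMap.rTensor (↥N) (d (j+1))))))

/-- `idLE n M` : the injective dimension of `M` is at most `n`. -/
def idLE (S : Type u) [CommRing S] : ℕ → ModuleCat.{u} S → Prop
  | 0, M => Module.Injective S M
  | n+1, M => ∃ (I C : ModuleCat.{u} S) (f : M →ₗ[S] I) (g : I →ₗ[S] C),
      IsSES f g ∧ Module.Injective S I ∧ idLE S n C

/-- `PD_0^n(R)` over a local ring: modules of projective dimension at most `n` that are
free on the punctured spectrum. -/
def PD0n [IsLocalRing R] (n : ℕ) : Set (ModuleCat.{u} R) :=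
  {M | Module.Finite R M ∧ pdLE R n M ∧
    ∀ p : PrimeSpectrum R, p.asIdeal ≠ IsLocalRing.maximalIdeal R →
      Module.Free (Localization.AtPrime p.asIdeal) (LocalizedModule p.asIdeal.primeCompl M)}

/-- `PD_0(R)` over a local ring: modules of finite projective dimension that are
free on the punctured spectrum. -/
def PD0 [IsLocalRing R] : Set (ModuleCat.{u} R) :=
  {M | Module.Finite R M ∧ (∃ n : ℕ, pdLE R n M) ∧
    ∀ p : PrimeSpectrum R, p.asIdeal ≠ IsLocalRing.maximalIdeal R →
      Module.Free (Localization.AtPrime p.asIdeal) (LocalizedModule p.asIdeal.primeCompl M)}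

/-- The residue field of a local ring, as a bundled module. -/
noncomputable abbrev residueMod (S : Type u) [CommRing S] [IsLocalRing S] : ModuleCat.{u} S :=
  ModuleCat.of S (IsLocalRing.ResidueField S)

/-!
For a resolving subcategory `𝒳` and a module `M`, the scalars `r` for which `r • 1` on `M` factors
through a member of `𝒳` form an ideal; for the projectives its zero locus is the nonfree locus of
`M`. If `π : F → C` is a surjection from a projective module and `r` a scalar, the pullback of `π`
along `r : C → C` is an extension of `C` by its syzygy, `r` acts on it through a projective, and `C`
lies in `𝒳` as soon as this pullback does and `r • 1` on `C` factors through `𝒳`.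

Globally this gives a noetherian induction on ideals `I` whose zero locus contains the nonfree
locus: for `p` minimal over `I` the module `M_p` is free on the punctured spectrum of `R_p`. If
`M_p` lies in `add 𝒳_p`, some `r ∉ p` factors through `𝒳` on `M`, and the pullback along `r`
allows `I` to be replaced by `I + (r)`.

Over a local ring with residue field `k`, let `𝒴` be resolving with a high syzygy of `k` in `𝒴`.
Every module free on the punctured spectrum then has its syzygy of the same order in `𝒴`, by
noetherian induction on its quotients: in depth zero divide by a copy of `k`, otherwise by a regular
scalar, at the cost of passing to the next syzygy. A module of depth at least `t` gains `t` steps: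
its `j`-th syzygy is in `𝒴` once the `(j + t)`-th syzygy of `k` is. Conversely, a module in `𝒴` of
depth exactly `t` lowers the order of the syzygy of `k` from `j + t + 1` to `j + t`; it need not be
free on the punctured spectrum, but pullbacks along scalars in the maximal ideal make it so without
increasing its depth.
-/

section ShortExactSequences

variable {R : Type u} [CommRing R]
  {A B C D : Type u} [AddCommGroup A] [Module R A] [AddCommGroup B] [Module R B]
  [AddCommGroup C] [Module R C] [AddCommGroup D] [Module R D]
  {f : A →ₗ[R] B} {g : B →ₗ[R] C}

namespace IsSES

theorem of_exact (hf : Function.Injective f) (hg : Function.Surjective g)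
    (hfg : Function.Exact f g) : IsSES f g :=
  ⟨hf, hg, (LinearMap.exact_iff.1 hfg).symm⟩

theorem subtype_ker (hg : Function.Surjective g) : IsSES (LinearMap.ker g).subtype g :=
  ⟨Submodule.injective_subtype _, hg, by rw [Submodule.range_subtype]⟩

theorem injective (s : IsSES f g) : Function.Injective f := s.1

theorem surjective (s : IsSES f g) : Function.Surjective g := s.2.1

theorem exact (s : IsSES f g) : Function.Exact f g := LinearMap.exact_iff.2 s.2.2.symm

theorem apply_apply_eq_zero (s : IsSES f g) (a : A) : g (f a) = 0 := s.exact.apply_apply_eq_zero a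

theorem exists_lift (s : IsSES f g) (u : D →ₗ[R] B) (hu : ∀ d, g (u d) = 0) :
    ∃ v : D →ₗ[R] A, ∀ d, f (v d) = u d :=
  ⟨u.codRestrictOfInjective f s.injective fun d ↦ (s.exact _).1 (hu d),
    u.codRestrictOfInjective_comp_apply f s.injective _⟩

theorem finite_middle (s : IsSES f g) :
    Module.Finite R A → Module.Finite R C → Module.Finite R B :=
  fun _ _ ↦ .of_exact s.exact s.surjective

theorem nonempty_equiv_prod [Module.Projective R C] (s : IsSES f g) :
    Nonempty (B ≃ₗ[R] A × C) :=
  let l := Module.projective_lifting_property g .id s.surjective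
  ⟨(s.exact.splitSurjectiveEquiv s.injective ⟨l.choose, l.choose_spec⟩).1⟩

theorem exists_ker_comp (s : IsSES f g) {p : D →ₗ[R] B} (hp : Function.Surjective p) :
    ∃ (u : LinearMap.ker p →ₗ[R] LinearMap.ker (g ∘ₗ p)) (v : LinearMap.ker (g ∘ₗ p) →ₗ[R] A),
      IsSES u v := by
  obtain ⟨v, hv⟩ := s.exists_lift (p ∘ₗ (LinearMap.ker (g ∘ₗ p)).subtype) fun d ↦ d.2
  refine ⟨Submodule.inclusion (LinearMap.ker_le_ker_comp p g), v,
    of_exact (Submodule.inclusion_injective _) (fun a ↦ ?_) fun b ↦ ?_⟩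
  · obtain ⟨x, hx⟩ := hp (f a)
    exact ⟨⟨x, by simp [hx, s.apply_apply_eq_zero]⟩, s.injective ((hv _).trans hx)⟩
  · rw [← map_eq_zero_iff f s.injective, hv]
    exact ⟨fun hb ↦ ⟨⟨b, hb⟩, rfl⟩, by rintro ⟨a, rfl⟩; exact a.2⟩

theorem exists_restrict (s : IsSES f g) (L : Submodule R B) :
    ∃ (f' : L.comap f →ₗ[R] L) (g' : L →ₗ[R] L.map g), IsSES f' g' := by
  refine ⟨f.restrict fun _ ↦ id, g.restrict fun _ ↦ Submodule.mem_map_of_mem,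
    .of_exact (fun a b hab ↦ ?_) ?_ fun ⟨b, hb⟩ ↦ ⟨fun h ↦ ?_, ?_⟩⟩
  · exact Subtype.ext (s.injective (congrArg Subtype.val hab))
  · rintro ⟨_, x, hx, rfl⟩
    exact ⟨⟨x, hx⟩, rfl⟩
  · obtain ⟨a, rfl⟩ := (s.exact b).1 (congrArg Subtype.val h)
    exact ⟨⟨a, hb⟩, rfl⟩
  · rintro ⟨a, ha⟩
    exact Subtype.ext ((congrArg g (congrArg Subtype.val ha).symm).trans (s.apply_apply_eq_zero _))

end IsSES

theorem nonempty_equiv_prod_ker_of_retract {i : A →ₗ[R] B} {ρ : B →ₗ[R] A}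
    (hi : ∀ a, ρ (i a) = a) : Nonempty (B ≃ₗ[R] A × LinearMap.ker ρ) :=
  ⟨((LinearMap.exact_subtype_ker_map ρ).splitSurjectiveEquiv (Submodule.injective_subtype _)
    ⟨i, LinearMap.ext hi⟩).1 ≪≫ₗ LinearEquiv.prodComm R _ _⟩

theorem IsSES.exists_factorization_kernel {K P X : Type u} [AddCommGroup K] [Module R K]
    [AddCommGroup P] [Module R P] [AddCommGroup X] [Module R X]
    [Module.Projective R B] [Module.Projective R P] (s : IsSES f g)
    {k : K →ₗ[R] P} {p : P →ₗ[R] X} (s' : IsSES k p) {i : C →ₗ[R] X} {j : X →ₗ[R] C} {r : R}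
    (hij : ∀ c, j (i c) = r • c) :
    ∃ (i' : A →ₗ[R] K × B) (j' : K × B →ₗ[R] A), ∀ a, j' (i' a) = r • a := by
  obtain ⟨α, hα⟩ := Module.projective_lifting_property p (i ∘ₗ g) s'.surjective
  obtain ⟨β, hβ⟩ := Module.projective_lifting_property g (j ∘ₗ p) s.surjective
  replace hα x : p (α x) = i (g x) := LinearMap.congr_fun hα x
  replace hβ x : g (β x) = j (p x) := LinearMap.congr_fun hβ x
  obtain ⟨u, hu⟩ := s'.exists_lift (α ∘ₗ f) fun a ↦ by simp [hα, s.apply_apply_eq_zero]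
  obtain ⟨v, hv⟩ := s.exists_lift (β ∘ₗ k) fun x ↦ by simp [hβ, s'.apply_apply_eq_zero]
  obtain ⟨w, hw⟩ := s.exists_lift (r • .id - β ∘ₗ α) fun b ↦ by simp [hβ, hα, hij]
  refine ⟨u.prod f, v.coprod w, fun a ↦ s.injective ?_⟩
  simp [hv, hw, hu]

/-- The fiber product of `g : B → C` and `g' : D → C`, as a submodule of `B × D`. -/
abbrev fiberProduct (g : B →ₗ[R] C) (g' : D →ₗ[R] C) : Submodule R (B × D) :=
  LinearMap.eqLocus (g ∘ₗ LinearMap.fst R B D) (g' ∘ₗ LinearMap.snd R B D)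

theorem mem_fiberProduct {g' : D →ₗ[R] C} {x : B × D} :
    x ∈ fiberProduct g g' ↔ g x.1 = g' x.2 := Iff.rfl

/-- Exchanging the two factors of a fiber product. -/
def fiberProductComm (g : B →ₗ[R] C) (g' : D →ₗ[R] C) :
    fiberProduct g g' ≃ₗ[R] fiberProduct g' g :=
  (LinearEquiv.prodComm R B D).ofSubmodules _ _ <| by
    ext ⟨d, b⟩
    simp [eq_comm]

theorem IsSES.exists_fiberProduct (s : IsSES f g) (g' : D →ₗ[R] C) :
    ∃ f' : A →ₗ[R] fiberProduct g g',
      IsSES f' (LinearMap.snd R B D ∘ₗ (fiberProduct g g').subtype) := by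
  refine ⟨(LinearMap.inl R B D ∘ₗ f).codRestrict _
    fun a ↦ by simp [s.apply_apply_eq_zero], of_exact (fun a a' h ↦ ?_)
    (fun d ↦ ?_) fun x ↦ ⟨fun hx ↦ ?_, ?_⟩⟩
  · exact s.injective (congrArg (·.1.1) h)
  · obtain ⟨b, hb⟩ := s.surjective (g' d)
    exact ⟨⟨(b, d), hb⟩, rfl⟩
  · obtain ⟨⟨b, d⟩, hbd⟩ := x
    obtain rfl : d = 0 := hx
    obtain ⟨a, rfl⟩ := (s.exact b).1 (by simpa [mem_fiberProduct] using hbd)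
    exact ⟨a, rfl⟩
  · rintro ⟨a, rfl⟩
    rfl

end ShortExactSequences

section ResolvingSubcategories

variable {R : Type u} [CommRing R] {𝒳 𝒴 : Set (ModuleCat.{u} R)}
  {A B C : Type u} [AddCommGroup A] [Module R A] [AddCommGroup B] [Module R B]
  [AddCommGroup C] [Module R C] {f : A →ₗ[R] B} {g : B →ₗ[R] C}

namespace IsResolving

theorem finite (h : IsResolving R 𝒳) (hA : ModuleCat.of R A ∈ 𝒳) : Module.Finite R A :=
  h.fg _ hA

theorem mem_of_equiv (h : IsResolving R 𝒳) (e : A ≃ₗ[R] B) (hA : ModuleCat.of R A ∈ 𝒳) :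
    ModuleCat.of R B ∈ 𝒳 :=
  h.iso_closed (.of R A) (.of R B) ⟨e⟩ hA

theorem mem_of_projective (h : IsResolving R 𝒳) [Module.Finite R A] [Module.Projective R A] :
    ModuleCat.of R A ∈ 𝒳 :=
  h.proj_mem (.of R A) ‹_› ‹_›

theorem mem_middle (h : IsResolving R 𝒳) (s : IsSES f g) (hA : ModuleCat.of R A ∈ 𝒳)
    (hC : ModuleCat.of R C ∈ 𝒳) : ModuleCat.of R B ∈ 𝒳 :=
  h.ext_closed (.of R A) (.of R B) (.of R C) f g s hA hC

theorem mem_syzygy [IsNoetherianRing R] (h : IsResolving R 𝒳) [Module.Finite R B]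
    [Module.Projective R B] (s : IsSES f g) (hC : ModuleCat.of R C ∈ 𝒳) :
    ModuleCat.of R A ∈ 𝒳 :=
  h.syzygy_closed (.of R A) (.of R B) (.of R C) f g s
    (Module.Finite.of_injective f s.injective) ‹_› ‹_› hC

theorem mem_of_prod_mem (h : IsResolving R 𝒳) (hAB : ModuleCat.of R (A × B) ∈ 𝒳) :
    ModuleCat.of R A ∈ 𝒳 :=
  h.summand_closed (.of R A) (.of R B) hAB

theorem prod_mem (h : IsResolving R 𝒳) (hA : ModuleCat.of R A ∈ 𝒳)
    (hB : ModuleCat.of R B ∈ 𝒳) : ModuleCat.of R (A × B) ∈ 𝒳 :=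
  h.mem_middle (.of_exact LinearMap.inl_injective LinearMap.snd_surjective .inl_snd) hA hB

theorem pi_mem (h : IsResolving R 𝒳) : ∀ {n : ℕ} (X : Fin n → ModuleCat.{u} R),
    (∀ i, X i ∈ 𝒳) → ModuleCat.of R (∀ i, X i) ∈ 𝒳
  | 0, _, _ => h.mem_of_projective
  | _ + 1, X, hX => h.mem_of_equiv (Fin.consLinearEquiv R fun i ↦ X i)
      (h.prod_mem (hX 0) (h.pi_mem _ fun i ↦ hX i.succ))

theorem mem_of_retract (h : IsResolving R 𝒳) {i : A →ₗ[R] B} {ρ : B →ₗ[R] A}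
    (hi : ∀ a, ρ (i a) = a) (hB : ModuleCat.of R B ∈ 𝒳) : ModuleCat.of R A ∈ 𝒳 :=
  (nonempty_equiv_prod_ker_of_retract hi).elim fun e ↦ h.mem_of_prod_mem (h.mem_of_equiv e hB)

theorem mem_of_surjective_projective (h : IsResolving R 𝒳) [Module.Projective R C]
    (s : IsSES f g) (hB : ModuleCat.of R B ∈ 𝒳) : ModuleCat.of R A ∈ 𝒳 :=
  s.nonempty_equiv_prod.elim fun e ↦ h.mem_of_prod_mem (h.mem_of_equiv e hB)

theorem of_retract_closed
    (finite : ∀ (A : Type u) [AddCommGroup A] [Module R A], ModuleCat.of R A ∈ 𝒳 →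
      Module.Finite R A)
    (retract : ∀ (A B : Type u) [AddCommGroup A] [Module R A] [AddCommGroup B] [Module R B]
      (i : A →ₗ[R] B) (ρ : B →ₗ[R] A), (∀ a, ρ (i a) = a) → ModuleCat.of R B ∈ 𝒳 →
      ModuleCat.of R A ∈ 𝒳)
    (proj : ∀ (A : Type u) [AddCommGroup A] [Module R A] [Module.Finite R A]
      [Module.Projective R A], ModuleCat.of R A ∈ 𝒳)
    (middle : ∀ (A B C : Type u) [AddCommGroup A] [Module R A] [AddCommGroup B] [Module R B]
      [AddCommGroup C] [Module R C] (f : A →ₗ[R] B) (g : B →ₗ[R] C), IsSES f g →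
      ModuleCat.of R A ∈ 𝒳 → ModuleCat.of R C ∈ 𝒳 → ModuleCat.of R B ∈ 𝒳)
    (syzygy : ∀ (A B C : Type u) [AddCommGroup A] [Module R A] [AddCommGroup B] [Module R B]
      [AddCommGroup C] [Module R C] [Module.Finite R A] [Module.Finite R B]
      [Module.Projective R B] (f : A →ₗ[R] B) (g : B →ₗ[R] C), IsSES f g →
      ModuleCat.of R C ∈ 𝒳 → ModuleCat.of R A ∈ 𝒳) : IsResolving R 𝒳 where
  fg M hM := finite M hM
  iso_closed M N := fun ⟨e⟩ hM ↦ retract N M e.symm e e.apply_symm_apply hM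
  proj_mem M _ _ := proj M
  summand_closed M N h := retract M (M × N) (.inl R M N) (.fst R M N) (fun _ ↦ rfl) h
  ext_closed A B C f g s hA hC := middle A B C f g s hA hC
  syzygy_closed A B C f g s _ _ _ hC := syzygy A B C f g s hC

end IsResolving

/-- The finitely generated projective modules: the smallest resolving subcategory. -/
def finiteProjectives (R : Type u) [CommRing R] : Set (ModuleCat.{u} R) :=
  {M | Module.Finite R M ∧ Module.Projective R M}

theorem isResolving_finiteProjectives : IsResolving R (finiteProjectives R) := by
  refine .of_retract_closed (fun A _ _ hA ↦ hA.1) ?_ (fun A _ _ _ _ ↦ ⟨‹_›, ‹_›⟩) ?_ ?_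
  · rintro A B _ _ _ _ i ρ hi ⟨_, _⟩
    exact ⟨.of_surjective ρ fun a ↦ ⟨_, hi a⟩, .of_split i ρ (LinearMap.ext hi)⟩
  · rintro A B C _ _ _ _ _ _ f g s ⟨hA, _⟩ ⟨hC, _⟩
    obtain ⟨e⟩ := s.nonempty_equiv_prod
    exact ⟨s.finite_middle hA hC, .of_equiv e.symm⟩
  · rintro A B C _ _ _ _ _ _ _ _ _ f g s ⟨_, _⟩
    obtain ⟨e⟩ := s.nonempty_equiv_prod
    have : Module.Projective R (A × C) := .of_equiv e
    exact ⟨‹_›, .of_split (.inl R A C) (.fst R A C) (LinearMap.fst_comp_inl ..)⟩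

theorem IsResolving.finiteProjectives_subset (h : IsResolving R 𝒳) : finiteProjectives R ⊆ 𝒳 :=
  fun M hM ↦ h.proj_mem M hM.1 hM.2

/-- `Ω⁻¹ 𝒳`: the finitely generated modules with a first syzygy in `𝒳`. -/
def syzygyPreimage (𝒳 : Set (ModuleCat.{u} R)) : Set (ModuleCat.{u} R) :=
  {C | Module.Finite R C ∧ ∃ (K P : ModuleCat.{u} R) (f : K →ₗ[R] P) (g : P →ₗ[R] C),
    Module.Finite R P ∧ Module.Projective R P ∧ IsSES f g ∧ K ∈ 𝒳}

theorem IsSES.mem_syzygyPreimage [Module.Finite R B] [Module.Projective R B] (s : IsSES f g)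
    (hA : ModuleCat.of R A ∈ 𝒳) : ModuleCat.of R C ∈ syzygyPreimage 𝒳 :=
  ⟨.of_surjective g s.surjective, .of R A, .of R B, f, g, ‹_›, ‹_›, s, hA⟩

namespace IsResolving

theorem mem_kernel (h : IsResolving R 𝒳) (s : IsSES f g) (hB : ModuleCat.of R B ∈ 𝒳)
    (hC : ModuleCat.of R C ∈ syzygyPreimage 𝒳) : ModuleCat.of R A ∈ 𝒳 := by
  obtain ⟨-, K, P, f', g', _, _, s', hK⟩ := hC
  obtain ⟨_, t⟩ := s.exists_fiberProduct g'
  obtain ⟨_, t'⟩ := s'.exists_fiberProduct g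
  exact h.mem_of_surjective_projective t
    (h.mem_of_equiv (fiberProductComm g' g) (h.mem_middle t' hK hB))

theorem mem_kernel_of_projective (h : IsResolving R 𝒳) [Module.Finite R B]
    [Module.Projective R B] (s : IsSES f g) (hC : ModuleCat.of R C ∈ syzygyPreimage 𝒳) :
    ModuleCat.of R A ∈ 𝒳 :=
  h.mem_kernel s h.mem_of_projective hC

variable [IsNoetherianRing R]

theorem mem_syzygyPreimage (h : IsResolving R 𝒳) (hC : ModuleCat.of R C ∈ 𝒳) :
    ModuleCat.of R C ∈ syzygyPreimage 𝒳 := by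
  have := h.finite hC
  obtain ⟨n, g, hg⟩ := Module.Finite.exists_fin' R C
  exact (IsSES.subtype_ker hg).mem_syzygyPreimage (h.mem_syzygy (.subtype_ker hg) hC)

protected theorem syzygyPreimage (h : IsResolving R 𝒳) : IsResolving R (syzygyPreimage 𝒳) := by
  refine .of_retract_closed (fun A _ _ hA ↦ hA.1) ?_
    (fun A _ _ _ _ ↦ h.mem_syzygyPreimage h.mem_of_projective) ?_ ?_
  · rintro A B _ _ _ _ i ρ hi ⟨_, K, P, k, p, _, _, s, hK⟩
    have : Module.Finite R A := .of_surjective ρ fun a ↦ ⟨_, hi a⟩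
    obtain ⟨n, π, hπ⟩ := Module.Finite.exists_fin' R A
    obtain ⟨i', ρ', hi'⟩ :=
      (IsSES.subtype_ker hπ).exists_factorization_kernel s (r := 1) (i := i) (j := ρ) (by simpa)
    refine (IsSES.subtype_ker hπ).mem_syzygyPreimage (h.mem_of_retract (by simpa using hi') ?_)
    exact h.prod_mem hK h.mem_of_projective
  · intro A B C _ _ _ _ _ _ f g s hA hC
    have := s.finite_middle hA.1 hC.1
    obtain ⟨n, p, hp⟩ := Module.Finite.exists_fin' R B
    obtain ⟨u, v, s'⟩ := s.exists_ker_comp hp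
    refine (IsSES.subtype_ker hp).mem_syzygyPreimage (h.mem_kernel s' ?_ hA)
    exact h.mem_kernel_of_projective (.subtype_ker (s.surjective.comp hp)) hC
  · intro A B C _ _ _ _ _ _ _ _ _ f g s hC
    exact h.mem_syzygyPreimage (h.mem_kernel_of_projective s hC)

end IsResolving

/-- `Ω⁻ⁿ 𝒳`: the finitely generated modules with an `n`-th syzygy in `𝒳`. -/
def iterSyzygyPreimage (𝒳 : Set (ModuleCat.{u} R)) : ℕ → Set (ModuleCat.{u} R)
  | 0 => 𝒳
  | n + 1 => syzygyPreimage (iterSyzygyPreimage 𝒳 n)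

namespace IsResolving

variable [IsNoetherianRing R]

protected theorem iterSyzygyPreimage (h : IsResolving R 𝒳) (n : ℕ) :
    IsResolving R (iterSyzygyPreimage 𝒳 n) := by
  induction n with
  | zero => exact h
  | succ n ih => exact ih.syzygyPreimage

theorem monotone_iterSyzygyPreimage (h : IsResolving R 𝒳) :
    Monotone (iterSyzygyPreimage 𝒳) :=
  monotone_nat_of_le_succ fun n _ hM ↦ (h.iterSyzygyPreimage n).mem_syzygyPreimage hM

end IsResolving

theorem IsMinSyz.mem_iterSyzygyPreimage {S : Type u} [CommRing S] [IsLocalRing S]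
    {𝒴 : Set (ModuleCat.{u} S)} (h : IsResolving S 𝒴) {K : ModuleCat.{u} S} (hK : K ∈ 𝒴) :
    ∀ {n : ℕ} {M : ModuleCat.{u} S}, IsMinSyz S n M K → M ∈ iterSyzygyPreimage 𝒴 n
  | 0, _, ⟨e⟩ => h.mem_of_equiv e hK
  | _ + 1, _, ⟨_, _, _, _, _, _, hg, _, hi, hr, hs⟩ =>
    IsSES.mem_syzygyPreimage ⟨hi, hg, hr⟩ (mem_iterSyzygyPreimage h hK hs)

end ResolvingSubcategories

section FactorizationIdeals

variable {R : Type u} [CommRing R] {𝒳 𝒴 : Set (ModuleCat.{u} R)}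
  {A B C X : Type u} [AddCommGroup A] [Module R A] [AddCommGroup B] [Module R B]
  [AddCommGroup C] [Module R C] [AddCommGroup X] [Module R X]
  {f : A →ₗ[R] B} {g : B →ₗ[R] C} {r : R}

theorem IsSES.exists_pushout (s : IsSES f g) {i : A →ₗ[R] X} {j : X →ₗ[R] A}
    (hij : ∀ a, j (i a) = r • a) :
    ∃ (B' : ModuleCat.{u} R) (f' : X →ₗ[R] B') (g' : B' →ₗ[R] C) (b : B →ₗ[R] B')
      (b' : B' →ₗ[R] B), IsSES f' g' ∧ (∀ x, g' (b x) = g x) ∧ ∀ x, b' (b x) = r • x := by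
  let N : Submodule R (B × X) := LinearMap.range (f.prod (-i))
  let g' : ((B × X) ⧸ N) →ₗ[R] C := N.liftQ (g ∘ₗ LinearMap.fst R B X) <| by
    rintro _ ⟨a, rfl⟩
    simp [s.apply_apply_eq_zero]
  let b' : ((B × X) ⧸ N) →ₗ[R] B := N.liftQ ((r • LinearMap.id).coprod (f ∘ₗ j)) <| by
    rintro _ ⟨a, rfl⟩
    simp [hij]
  refine ⟨.of R ((B × X) ⧸ N), N.mkQ ∘ₗ .inr R B X, g', N.mkQ ∘ₗ .inl R B X, b',
    .of_exact ?_ (fun c ↦ ?_) fun z ↦ ⟨fun hz ↦ ?_, ?_⟩, fun _ ↦ rfl, fun x ↦ ?_⟩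
  · refine (injective_iff_map_eq_zero _).2 fun x hx ↦ ?_
    obtain ⟨a, ha⟩ := (Submodule.Quotient.mk_eq_zero N).1 hx
    obtain rfl : a = 0 := s.injective ((congrArg Prod.fst ha).trans (map_zero f).symm)
    simpa using (congrArg Prod.snd ha).symm
  · obtain ⟨b, rfl⟩ := s.surjective c
    exact ⟨N.mkQ (b, 0), rfl⟩
  · obtain ⟨⟨b, x⟩, rfl⟩ := N.mkQ_surjective z
    obtain ⟨a, rfl⟩ := (s.exact b).1 hz
    exact ⟨x + i a, (Submodule.Quotient.eq N).2 ⟨-a, by simp⟩⟩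
  · rintro ⟨x, rfl⟩
    exact map_zero g
  · change r • x + f (j 0) = r • x
    simp

/-- The ideal of all `r : R` such that multiplication by `r` on `M` factors through a member
of `𝒳`. -/
def IsResolving.factorIdeal (h : IsResolving R 𝒳) (M : Type u) [AddCommGroup M] [Module R M] :
    Ideal R where
  carrier := {r | ∃ (X : ModuleCat.{u} R) (i : M →ₗ[R] X) (j : X →ₗ[R] M),
    X ∈ 𝒳 ∧ ∀ m, j (i m) = r • m}
  zero_mem' := ⟨.of R PUnit, 0, 0, h.mem_of_projective, by simp⟩
  add_mem' := by
    rintro r r' ⟨X, i, j, hX, hij⟩ ⟨X', i', j', hX', hij'⟩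
    exact ⟨.of R (X × X'), i.prod i', j.coprod j', h.prod_mem hX hX', by simp [hij, hij', add_smul]⟩
  smul_mem' := by
    rintro c r ⟨X, i, j, hX, hij⟩
    exact ⟨X, i, c • j, hX, by simp [hij, mul_smul]⟩

namespace IsResolving

theorem mem_factorIdeal_of_comp_eq (h : IsResolving R 𝒳) (hX : ModuleCat.of R X ∈ 𝒳)
    (i : C →ₗ[R] X) (j : X →ₗ[R] C) (hij : ∀ c, j (i c) = r • c) : r ∈ h.factorIdeal C :=
  ⟨.of R X, i, j, hX, hij⟩

theorem factorIdeal_eq_top_iff (h : IsResolving R 𝒳) :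
    h.factorIdeal C = ⊤ ↔ ModuleCat.of R C ∈ 𝒳 := by
  rw [Ideal.eq_top_iff_one]
  refine ⟨fun ⟨X, i, j, hX, hij⟩ ↦ ?_, fun hC ↦ ⟨_, .id, .id, hC, by simp⟩⟩
  exact h.mem_of_retract (i := i) (ρ := j) (by simpa using hij) hX

theorem factorIdeal_mono (h : IsResolving R 𝒳) (h' : IsResolving R 𝒴) (h𝒳𝒴 : 𝒳 ⊆ 𝒴) :
    h.factorIdeal C ≤ h'.factorIdeal C :=
  fun _ ⟨X, i, j, hX, hij⟩ ↦ ⟨X, i, j, h𝒳𝒴 hX, hij⟩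

theorem annihilator_le_factorIdeal (h : IsResolving R 𝒳) :
    Module.annihilator R C ≤ h.factorIdeal C :=
  fun r hr ↦ ⟨.of R PUnit, 0, 0, h.mem_of_projective,
    fun c ↦ by simp [Module.mem_annihilator.1 hr c]⟩

theorem factorIdeal_le_of_retract (h : IsResolving R 𝒳) {i : A →ₗ[R] B} {ρ : B →ₗ[R] A}
    (hi : ∀ a, ρ (i a) = a) : h.factorIdeal B ≤ h.factorIdeal A :=
  fun _ ⟨X, i', j', hX, hij⟩ ↦ ⟨X, i' ∘ₗ i, ρ ∘ₗ j', hX, by simp [hij, hi]⟩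

theorem factorIdeal_mul_factorIdeal_le (h : IsResolving R 𝒳) (s : IsSES f g) :
    h.factorIdeal A * h.factorIdeal C ≤ h.factorIdeal B := by
  rw [Ideal.mul_le]
  rintro r ⟨X, i, j, hX, hij⟩ r' ⟨Z, i', j', hZ, hij'⟩
  obtain ⟨B', f', g', b, b', s', hgb, hbb⟩ := s.exists_pushout hij
  obtain ⟨_, t⟩ := s'.exists_fiberProduct j'
  refine h.mem_factorIdeal_of_comp_eq (h.mem_middle t hX hZ)
    (((r' • b).prod (i' ∘ₗ g)).codRestrict (fiberProduct g' j') fun x ↦ by simp [hgb, hij'])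
    (b' ∘ₗ .fst R _ _ ∘ₗ Submodule.subtype _) fun x ↦ ?_
  simp [hbb, mul_smul, smul_comm r r']

theorem factorIdeal_le_syzygy [IsNoetherianRing R] (h : IsResolving R 𝒳) (s : IsSES f g)
    [Module.Finite R B] [Module.Projective R B] : h.factorIdeal C ≤ h.factorIdeal A := by
  rintro r ⟨X, i, j, hX, hij⟩
  have := h.fg X hX
  obtain ⟨n, p, hp⟩ := Module.Finite.exists_fin' R X
  obtain ⟨i', j', hij'⟩ := s.exists_factorization_kernel (.subtype_ker hp) hij
  exact h.mem_factorIdeal_of_comp_eq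
    (h.prod_mem (h.mem_syzygy (.subtype_ker hp) hX) h.mem_of_projective) i' j' hij'

/-- The finitely generated modules on which multiplication by some element of `W` factors through
`𝒳`; over a noetherian ring, these are the modules that become members of `𝒳` after inverting `W`.
-/
def saturation (h : IsResolving R 𝒳) (W : Submonoid R) : Set (ModuleCat.{u} R) :=
  {M | Module.Finite R M ∧ ∃ r ∈ W, r ∈ h.factorIdeal M}

theorem isResolving_saturation [IsNoetherianRing R] (h : IsResolving R 𝒳) (W : Submonoid R) :
    IsResolving R (h.saturation W) := by
  refine .of_retract_closed (fun A _ _ hA ↦ hA.1) ?_ ?_ ?_ ?_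
  · rintro A B _ _ _ _ i ρ hi ⟨_, r, hr, hB⟩
    exact ⟨.of_surjective ρ fun a ↦ ⟨_, hi a⟩, r, hr, h.factorIdeal_le_of_retract hi hB⟩
  · intro A _ _ _ _
    exact ⟨‹_›, 1, W.one_mem, by simp [h.factorIdeal_eq_top_iff.2 h.mem_of_projective]⟩
  · rintro A B C _ _ _ _ _ _ f g s ⟨hA, r, hr, hrA⟩ ⟨hC, r', hr', hrC⟩
    exact ⟨s.finite_middle hA hC, r * r', W.mul_mem hr hr',
      h.factorIdeal_mul_factorIdeal_le s (Ideal.mul_mem_mul hrA hrC)⟩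
  · rintro A B C _ _ _ _ _ _ _ _ _ f g s ⟨_, r, hr, hrC⟩
    exact ⟨‹_›, r, hr, h.factorIdeal_le_syzygy s hrC⟩

end IsResolving

/-- The ideal of all `r : R` such that multiplication by `r` on `M` factors through a finitely
generated projective module; its zero locus is the nonfree locus of `M`. -/
abbrev stableAnnihilator (R : Type u) [CommRing R] (M : Type u) [AddCommGroup M] [Module R M] :
    Ideal R :=
  isResolving_finiteProjectives.factorIdeal M

/-- The finitely generated modules whose nonfree locus is contained in the zero locus of `I`. -/
def projectiveAwayFrom (I : Ideal R) : Set (ModuleCat.{u} R) :=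
  {M | Module.Finite R M ∧ I ≤ (stableAnnihilator R M).radical}

theorem isResolving_projectiveAwayFrom [IsNoetherianRing R] (I : Ideal R) :
    IsResolving R (projectiveAwayFrom I) := by
  have h := isResolving_finiteProjectives (R := R)
  refine .of_retract_closed (fun A _ _ hA ↦ hA.1) ?_ ?_ ?_ ?_
  · rintro A B _ _ _ _ i ρ hi ⟨_, hB⟩
    exact ⟨.of_surjective ρ fun a ↦ ⟨_, hi a⟩,
      hB.trans (Ideal.radical_mono (h.factorIdeal_le_of_retract hi))⟩
  · intro A _ _ _ _
    exact ⟨‹_›, by simp [h.factorIdeal_eq_top_iff.2 h.mem_of_projective, Ideal.radical_top]⟩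
  · rintro A B C _ _ _ _ _ _ f g s ⟨hA, hIA⟩ ⟨hC, hIC⟩
    refine ⟨s.finite_middle hA hC,
      le_trans ?_ (Ideal.radical_mono (h.factorIdeal_mul_factorIdeal_le s))⟩
    rw [Ideal.radical_mul]
    exact le_inf hIA hIC
  · rintro A B C _ _ _ _ _ _ _ _ _ f g s ⟨_, hC⟩
    exact ⟨‹_›, hC.trans (Ideal.radical_mono (h.factorIdeal_le_syzygy s))⟩

end FactorizationIdeals

section SMulPullback
open scoped Pointwise

variable {R : Type u} [CommRing R] {𝒳 : Set (ModuleCat.{u} R)}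
  {C F K P X : Type u} [AddCommGroup C] [Module R C] [AddCommGroup F] [Module R F]
  [AddCommGroup K] [Module R K] [AddCommGroup P] [Module R P] [AddCommGroup X] [Module R X]
  {π : F →ₗ[R] C}

/-- The pullback of `π : F → C` along multiplication by `r` on `C`. For `F` projective and `π`
surjective this is an extension of `C` by its syzygy, on which `r` factors through a projective
module. -/
abbrev smulPullback (π : F →ₗ[R] C) (r : R) : Submodule R (F × C) :=
  fiberProduct π (r • LinearMap.id)

theorem IsSES.exists_smulPullback {k : K →ₗ[R] F} (s : IsSES k π) (r : R) :
    ∃ k' : K →ₗ[R] smulPullback π r,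
      IsSES k' (LinearMap.snd R F C ∘ₗ (smulPullback π r).subtype) :=
  s.exists_fiberProduct _

theorem isSES_smul_mkQ {y : R} (hy : IsSMulRegular C y) :
    IsSES (y • (LinearMap.id : C →ₗ[R] C)) (Submodule.mkQ (y • (⊤ : Submodule R C))) :=
  .of_exact hy (Submodule.mkQ_surjective _) fun c ↦ by
    rw [Submodule.mkQ_apply, Submodule.Quotient.mk_eq_zero, Submodule.mem_smul_pointwise_iff_exists]
    simp

theorem isSES_smulPullback_smul_top (hπ : Function.Surjective π) {y : R}
    (hy : IsSMulRegular C y) :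
    IsSES (LinearMap.fst R F C ∘ₗ (smulPullback π y).subtype)
      (Submodule.mkQ (y • (⊤ : Submodule R C)) ∘ₗ π) := by
  refine .of_exact ?_ ((Submodule.mkQ_surjective _).comp hπ) fun x ↦ ?_
  · rintro ⟨⟨x, c⟩, hx⟩ ⟨⟨x', c'⟩, hx'⟩ (rfl : x = x')
    obtain rfl : c = c' := hy (hx.symm.trans hx')
    rfl
  · rw [LinearMap.comp_apply, Submodule.mkQ_apply, Submodule.Quotient.mk_eq_zero,
      Submodule.mem_smul_pointwise_iff_exists]
    constructor
    · rintro ⟨c, -, hc⟩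
      exact ⟨⟨(x, c), hc.symm⟩, rfl⟩
    · rintro ⟨⟨⟨_, c⟩, hx⟩, rfl⟩
      exact ⟨c, trivial, hx.symm⟩

/-- Up to projective summands, `smulPullback` commutes with taking syzygies. -/
theorem IsSES.exists_smulPullback_syzygy {k : K →ₗ[R] P} {p : P →ₗ[R] C} (s : IsSES k p)
    {q : F →ₗ[R] K} (hq : Function.Surjective q) (r : R) :
    ∃ (u : smulPullback q r →ₗ[R] F × P) (v : F × P →ₗ[R] smulPullback p r), IsSES u v := by
  refine ⟨(LinearMap.fst R F K).prod (-(k ∘ₗ LinearMap.snd R F K)) ∘ₗ Submodule.subtype _,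
    (((k ∘ₗ q).coprod (r • LinearMap.id)).prod (p ∘ₗ LinearMap.snd R F P)).codRestrict _
      fun x ↦ by simp [s.apply_apply_eq_zero], .of_exact ?_ ?_ ?_⟩
  · rintro ⟨⟨x, c⟩, hx⟩ ⟨⟨x', c'⟩, hx'⟩ hxx
    obtain rfl : x = x' := congrArg Prod.fst hxx
    obtain rfl : c = c' := s.injective (neg_injective (congrArg Prod.snd hxx))
    rfl
  · rintro ⟨⟨y, c⟩, hy⟩
    obtain ⟨z, rfl⟩ := s.surjective c
    obtain ⟨a, ha⟩ := (s.exact (y - r • z)).1 <| by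
      rw [map_sub, map_smul, sub_eq_zero]
      exact hy
    obtain ⟨x, rfl⟩ := hq a
    refine ⟨(x, z), Subtype.ext (Prod.ext ?_ rfl)⟩
    change k (q x) + r • z = y
    rw [ha, sub_add_cancel]
  · rintro ⟨x, z⟩
    constructor
    · intro hxz
      have hx : k (q x) + r • z = 0 := congrArg (·.1.1) hxz
      obtain ⟨a, rfl⟩ := (s.exact z).1 (congrArg (·.1.2) hxz)
      refine ⟨⟨(x, -a), s.injective ?_⟩, by simp⟩
      simpa using eq_neg_of_add_eq_zero_left hx
    · rintro ⟨⟨⟨x', a⟩, hx : q x' = r • a⟩, hxz⟩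
      obtain rfl : x' = x := congrArg Prod.fst hxz
      obtain rfl : -k a = z := congrArg Prod.snd hxz
      exact Subtype.ext (Prod.ext (by simp [hx]) (by simp [s.apply_apply_eq_zero]))

theorem exists_isSES_smulPullback_coprod (hπ : Function.Surjective π) (j : X →ₗ[R] C) (r : R) :
    ∃ (u : smulPullback π r →ₗ[R] smulPullback (π.coprod j) r)
      (v : smulPullback (π.coprod j) r →ₗ[R] X), IsSES u v := by
  refine ⟨(((LinearMap.inl R F X).prodMap .id) ∘ₗ Submodule.subtype _).codRestrict _
    fun x ↦ by obtain ⟨x, hx⟩ := x; simpa using hx,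
    .snd R F X ∘ₗ .fst R (F × X) C ∘ₗ Submodule.subtype _,
    .of_exact ?_ (fun x ↦ ?_) fun z ↦ ⟨fun hz ↦ ?_, ?_⟩⟩
  · rintro ⟨⟨x, c⟩, hx⟩ ⟨⟨x', c'⟩, hx'⟩ hxx
    obtain rfl : x = x' := congrArg (·.1.1.1) hxx
    obtain rfl : c = c' := congrArg (·.1.2) hxx
    rfl
  · obtain ⟨y, hy⟩ := hπ (-j x)
    exact ⟨⟨((y, x), 0), by simp [hy]⟩, rfl⟩
  · obtain ⟨⟨⟨y, x⟩, c⟩, hyxc⟩ := z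
    obtain rfl : x = 0 := hz
    exact ⟨⟨(y, c), by simpa using hyxc⟩, rfl⟩
  · rintro ⟨_, rfl⟩
    rfl

theorem mem_stableAnnihilator_smulPullback (π : F →ₗ[R] C) (r : R) [Module.Finite R F]
    [Module.Projective R F] : r ∈ stableAnnihilator R (smulPullback π r) := by
  refine isResolving_finiteProjectives.mem_factorIdeal_of_comp_eq
    isResolving_finiteProjectives.mem_of_projective (.fst R F C ∘ₗ Submodule.subtype _)
    (((r • LinearMap.id).prod π).codRestrict _ fun x ↦ by simp) ?_
  rintro ⟨⟨x, c⟩, hx⟩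
  exact Subtype.ext (Prod.ext rfl hx)

theorem stableAnnihilator_sup_le_radical_smulPullback [IsNoetherianRing R] [Module.Finite R F]
    [Module.Projective R F] (hπ : Function.Surjective π) (r : R) :
    stableAnnihilator R C ⊔ Ideal.span {r} ≤
      (stableAnnihilator R (smulPullback π r)).radical := by
  have h := isResolving_finiteProjectives (R := R)
  have s := IsSES.subtype_ker hπ
  obtain ⟨_, s'⟩ := s.exists_smulPullback r
  refine sup_le (fun c hc ↦ ⟨2, ?_⟩) ?_
  · rw [pow_two]
    exact h.factorIdeal_mul_factorIdeal_le s' (Ideal.mul_mem_mul (h.factorIdeal_le_syzygy s hc) hc)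
  · rw [Ideal.span_singleton_le_iff_mem]
    exact Ideal.le_radical (mem_stableAnnihilator_smulPullback π r)

/-- The finitely generated modules on which multiplication by `r` factors through `𝒳`. -/
def IsResolving.smulFactorable (h : IsResolving R 𝒳) (r : R) : Set (ModuleCat.{u} R) :=
  {M | Module.Finite R M ∧ r ∈ h.factorIdeal M}

namespace IsResolving

theorem smulPullback_mem [IsNoetherianRing R] [Module.Finite R F] [Module.Projective R F]
    (h : IsResolving R 𝒳) (hπ : Function.Surjective π) (r : R) (hC : ModuleCat.of R C ∈ 𝒳) :
    ModuleCat.of R (smulPullback π r) ∈ 𝒳 := by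
  obtain ⟨_, s⟩ := (IsSES.subtype_ker hπ).exists_smulPullback r
  exact h.mem_middle s (h.mem_syzygy (.subtype_ker hπ) hC) hC

theorem mem_of_smulPullback_mem (h : IsResolving R 𝒳) (hπ : Function.Surjective π) {r : R}
    (hr : r ∈ h.factorIdeal C) (hmem : ModuleCat.of R (smulPullback π r) ∈ 𝒳) :
    ModuleCat.of R C ∈ 𝒳 := by
  obtain ⟨X, i, j, hX, hij⟩ := hr
  obtain ⟨_, _, s⟩ := exists_isSES_smulPullback_coprod hπ j r
  refine h.mem_of_retract (i := (((0 : C →ₗ[R] F).prod i).prod .id).codRestrict _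
    fun c ↦ by simp [hij]) (ρ := .snd R (F × X) C ∘ₗ Submodule.subtype _) (fun c ↦ rfl)
    (h.mem_middle s hmem hX)

theorem mem_iterSyzygyPreimage_of_smulPullback_mem [IsNoetherianRing R] (h : IsResolving R 𝒳)
    {r : R} (n : ℕ) (C : Type u) [AddCommGroup C] [Module R C]
    (hC : ModuleCat.of R C ∈ iterSyzygyPreimage (h.smulFactorable r) n)
    (hmem : ∀ (F : Type u) [AddCommGroup F] [Module R F] [Module.Finite R F]
      [Module.Projective R F] (π : F →ₗ[R] C), Function.Surjective π →
      ModuleCat.of R (smulPullback π r) ∈ iterSyzygyPreimage 𝒳 n) :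
    ModuleCat.of R C ∈ iterSyzygyPreimage 𝒳 n := by
  induction n generalizing C with
  | zero =>
    have := hC.1
    obtain ⟨_, π, hπ⟩ := Module.Finite.exists_fin' R C
    exact h.mem_of_smulPullback_mem hπ hC.2 (hmem _ π hπ)
  | succ n ih =>
    obtain ⟨_, K, P, k, p, _, _, s, hK⟩ := hC
    refine s.mem_syzygyPreimage (ih K hK fun F _ _ _ _ q hq ↦ ?_)
    obtain ⟨_, _, s'⟩ := s.exists_smulPullback_syzygy hq r
    exact (h.iterSyzygyPreimage n).mem_kernel_of_projective s' (hmem P p s.surjective)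

end IsResolving

end SMulPullback

section Depth
open scoped Pointwise
open IsLocalRing Abelian RingTheory.Sequence

variable {R : Type u} [CommRing R] {M : Type u} [AddCommGroup M] [Module R M] {I : Ideal R} {y : R}

theorem depthE_quotSMulTop_add_one_le (hyI : y ∈ I) (hy : IsSMulRegular M y) :
    depthE R I (QuotSMulTop y M) + 1 ≤ depthE R I M := by
  have hne : {x : ℕ∞ | ∃ rs : List R, (∀ r ∈ rs, r ∈ I) ∧ IsWeaklyRegular (QuotSMulTop y M) rs ∧
      x = rs.length}.Nonempty := ⟨0, [], by simp⟩
  rw [depthE, ENat.sSup_add hne]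
  refine iSup₂_le ?_
  rintro _ ⟨rs, hrs, hreg, rfl⟩
  exact le_sSup ⟨y :: rs, by simpa using ⟨hyI, hrs⟩, .cons hy hreg, by simp⟩

theorem depthE_eq_zero_iff : depthE R I M = 0 ↔ ∀ y ∈ I, ¬ IsSMulRegular M y := by
  refine ⟨fun h y hyI hy ↦ ?_, fun h ↦ ENat.sSup_eq_zero.2 ?_⟩
  · simpa [h] using depthE_quotSMulTop_add_one_le hyI hy
  · rintro _ ⟨_ | ⟨y, rs⟩, hrs, hreg, rfl⟩
    · simp
    · exact absurd ((isWeaklyRegular_cons_iff M y rs).1 hreg).1 (h y (hrs y (by simp)))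

theorem depthE_eq_top_of_subsingleton [Subsingleton M] : depthE R I M = ⊤ := by
  refine ENat.eq_top_iff_forall_ge.2 fun n ↦ le_sSup ⟨List.replicate n 0, ?_, ?_, by simp⟩
  · simp +contextual [List.mem_replicate]
  · exact (isWeaklyRegular_iff _ _).2 fun i _ ↦ Function.injective_of_subsingleton _

variable {S : Type u} [CommRing S]
  {A B C D : Type u} [AddCommGroup A] [Module S A] [AddCommGroup B] [Module S B]
  [AddCommGroup C] [Module S C] [AddCommGroup D] [Module S D] {f : A →ₗ[S] B} {g : B →ₗ[S] C}

theorem IsSES.shortExact (s : IsSES f g) : (ModuleCat.shortComplexOfCompEqZero f g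
    s.exact.linearMap_comp_eq_zero).ShortExact :=
  ModuleCat.shortComplex_shortExact _ s.exact s.injective s.surjective

variable [IsLocalRing S]

theorem annihilator_residueField : Module.annihilator S (ResidueField S) = maximalIdeal S :=
  Ideal.annihilator_quotient

/-- The depth of a module over a local ring, with respect to the maximal ideal. -/
noncomputable abbrev depth (S : Type u) [CommRing S] [IsLocalRing S] (M : Type u)
    [AddCommGroup M] [Module S M] : ℕ∞ :=
  depthE S (maximalIdeal S) M

theorem natCast_le_depth_iff_ext [IsNoetherianRing S] [Module.Finite S C] (n : ℕ) :
    n ≤ depth S C ↔ ∀ i < n, Subsingleton (Ext (residueMod S) (ModuleCat.of S C) i) := by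
  cases subsingleton_or_nontrivial C
  · have hid : 𝟙 (ModuleCat.of S C) = 0 := by
      ext c
      exact Subsingleton.elim _ _
    have (i : ℕ) : Subsingleton (Ext (residueMod S) (ModuleCat.of S C) i) :=
      subsingleton_of_forall_eq 0 fun x ↦ by
        rw [← Ext.comp_mk₀_id x, hid, Ext.mk₀_zero, Ext.comp_zero]
    simp [depthE_eq_top_of_subsingleton, this]
  have hlt : maximalIdeal S • (⊤ : Submodule S C) < ⊤ :=
    (Submodule.top_ne_ideal_smul_of_le_jacobson_annihilator
      (IsLocalRing.maximalIdeal_le_jacobson _)).symm.lt_top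
  have hsupp : Module.support S (residueMod S) = PrimeSpectrum.zeroLocus (maximalIdeal S) := by
    rw [Module.support_eq_zeroLocus, annihilator_residueField]
  constructor
  · intro h i hi
    obtain ⟨_, ⟨rs, hrs, hreg, rfl⟩, hlt'⟩ := lt_sSup_iff.1 ((Nat.cast_lt.2 hi).trans_le h)
    exact ModuleCat.subsingleton_ext_of_exists_isRegular (maximalIdeal S) (residueMod S)
      hsupp.le (.of S C) hlt rs hrs
      ((isRegular_iff_isWeaklyRegular_of_subset_maximalIdeal hrs).2 hreg) i (Nat.cast_lt.1 hlt')
  · intro h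
    obtain ⟨rs, hl, hrs, hreg⟩ := ModuleCat.exists_isRegular_of_exists_subsingleton_ext
      (maximalIdeal S) n (.of S C) hlt (residueMod S) hsupp h
    exact le_sSup ⟨rs, hrs, hreg.toIsWeaklyRegular, by rw [hl]⟩

theorem exists_injective_residueField_of_depth_eq_zero [IsNoetherianRing S] [Module.Finite S C]
    (h : depth S C = 0) : ∃ f : ResidueField S →ₗ[S] C, Function.Injective f := by
  have : IsSimpleModule S (ResidueField S) :=
    isSimpleModule_iff_isCoatom.2 (maximalIdeal.isMaximal S).out
  by_contra! hf
  have : Subsingleton (ResidueField S →ₗ[S] C) :=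
    subsingleton_of_forall_eq 0 fun f ↦ f.injective_or_eq_zero.resolve_left (hf f)
  obtain ⟨y, hy, hreg⟩ := IsSMulRegular.subsingleton_linearMap_iff.1 this
  rw [annihilator_residueField] at hy
  exact depthE_eq_zero_iff.1 h y hy hreg

section IsSES

variable [IsNoetherianRing S] [Module.Finite S B] (s : IsSES f g)
include s

theorem IsSES.min_depth_le_depth_middle : min (depth S A) (depth S C) ≤ depth S B := by
  have : Module.Finite S A := .of_injective f s.injective
  have : Module.Finite S C := .of_surjective g s.surjective
  refine ENat.forall_natCast_le_iff_le.1 fun n hn ↦ (natCast_le_depth_iff_ext n).2 fun i hi ↦ ?_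
  obtain ⟨hA, hC⟩ := le_min_iff.1 hn
  have := (natCast_le_depth_iff_ext n).1 hA i hi
  have := (natCast_le_depth_iff_ext n).1 hC i hi
  refine subsingleton_of_forall_eq 0 fun x ↦ ?_
  obtain ⟨y, rfl⟩ := Ext.covariant_sequence_exact₂ (residueMod S) s.shortExact x
    (Subsingleton.elim (α := Ext (residueMod S) (.of S C) i) _ _)
  rw [Subsingleton.elim (α := Ext (residueMod S) (.of S A) i) y 0, Ext.zero_comp]

theorem IsSES.min_depth_le_depth_left : min (depth S B) (depth S C + 1) ≤ depth S A := by
  have : Module.Finite S A := .of_injective f s.injective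
  have : Module.Finite S C := .of_surjective g s.surjective
  refine ENat.forall_natCast_le_iff_le.1 fun n hn ↦ (natCast_le_depth_iff_ext n).2 fun i hi ↦ ?_
  obtain ⟨hB, hC⟩ := le_min_iff.1 hn
  have := (natCast_le_depth_iff_ext n).1 hB i hi
  refine subsingleton_of_forall_eq 0 fun x ↦ ?_
  have hx : x.comp (Ext.mk₀ (ModuleCat.ofHom f)) (add_zero i) = 0 := Subsingleton.elim _ _
  cases i with
  | zero =>
    have : Mono (ModuleCat.ofHom f) := (ModuleCat.mono_iff_injective _).2 s.injective
    exact Ext.postcomp_mk₀_injective_of_mono (residueMod S) (ModuleCat.ofHom f)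
      (hx.trans (map_zero _).symm)
  | succ i =>
    obtain ⟨n, rfl⟩ := Nat.exists_eq_add_of_lt (Nat.zero_lt_of_lt hi)
    have hC' : ((0 + n : ℕ) : ℕ∞) ≤ depth S C :=
      (ENat.add_le_add_iff_right ENat.one_ne_top).1 (by exact_mod_cast hC)
    have := (natCast_le_depth_iff_ext _).1 hC' i (by omega)
    obtain ⟨y, rfl⟩ := Ext.covariant_sequence_exact₁ (residueMod S) s.shortExact x hx rfl
    rw [Subsingleton.elim (α := Ext (residueMod S) (.of S C) i) y 0, Ext.zero_comp]

theorem IsSES.min_depth_le_depth_right : min (depth S A) (depth S B + 1) ≤ depth S C + 1 := by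
  have : Module.Finite S A := .of_injective f s.injective
  have : Module.Finite S C := .of_surjective g s.surjective
  refine ENat.forall_natCast_le_iff_le.1 fun n hn ↦ ?_
  obtain ⟨hA, hB⟩ := le_min_iff.1 hn
  obtain _ | n := n
  · simp
  push_cast at hB ⊢
  rw [ENat.add_le_add_iff_right ENat.one_ne_top] at hB ⊢
  refine (natCast_le_depth_iff_ext n).2 fun i hi ↦ subsingleton_of_forall_eq 0 fun x ↦ ?_
  have := (natCast_le_depth_iff_ext n).1 hB i hi
  have := (natCast_le_depth_iff_ext (n + 1)).1 hA (i + 1) (by omega)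
  obtain ⟨y, rfl⟩ := Ext.covariant_sequence_exact₃ (residueMod S) s.shortExact x rfl
    (Subsingleton.elim (α := Ext (residueMod S) (.of S A) (i + 1)) _ _)
  rw [Subsingleton.elim (α := Ext (residueMod S) (.of S B) i) y 0, Ext.zero_comp]

end IsSES

theorem depth_quotSMulTop_add_one [IsNoetherianRing S] [Module.Finite S C] {y : S}
    (hym : y ∈ maximalIdeal S) (hy : IsSMulRegular C y) :
    depth S (QuotSMulTop y C) + 1 = depth S C := by
  refine (depthE_quotSMulTop_add_one_le hym hy).antisymm ?_
  simpa using (isSES_smul_mkQ hy).min_depth_le_depth_right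

theorem comp_mk₀_smul_id_eq_zero {r : S} (hr : r ∈ maximalIdeal S) {Y : ModuleCat.{u} S} {n : ℕ}
    (x : Ext (residueMod S) Y n) : x.comp (Ext.mk₀ (r • 𝟙 Y)) (add_zero n) = 0 := by
  rw [← annihilator_residueField] at hr
  have h := Ext.postcomp_smul_id_eq_zero_of_mem_annihilator (M := Y) (N := residueMod S) hr n
  exact congrArg (·.hom x) h

theorem depth_smulPullback_le [IsNoetherianRing S] [Module.Finite S D] {π : D →ₗ[S] C}
    (hπ : Function.Surjective π) {r : S} (hr : r ∈ maximalIdeal S) :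
    depth S (smulPullback π r) ≤ depth S C := by
  have : Module.Finite S C := .of_surjective π hπ
  let φ : D × C →ₗ[S] C := (-π).coprod (r • LinearMap.id)
  have s : IsSES (smulPullback π r).subtype φ := by
    refine .of_exact (Submodule.injective_subtype _) (fun c ↦ ?_) fun x ↦ ?_
    · obtain ⟨x, hx⟩ := hπ (-c)
      exact ⟨(x, 0), by simp [φ, hx]⟩
    · simp [φ, neg_add_eq_zero]
  refine ENat.forall_natCast_le_iff_le.1 fun n hn ↦ (natCast_le_depth_iff_ext n).2 fun i hi ↦
    subsingleton_of_forall_eq 0 fun x ↦ ?_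
  have := (natCast_le_depth_iff_ext n).1 hn i hi
  let ι : ModuleCat.of S C ⟶ .of S (D × C) := ModuleCat.ofHom (.inr S D C)
  let ρ : ModuleCat.of S (D × C) ⟶ .of S C := ModuleCat.ofHom (.snd S D C)
  have hιφ : ι ≫ ModuleCat.ofHom φ = r • 𝟙 _ := by
    ext c
    simp [ι, φ]
  have hιρ : ι ≫ ρ = 𝟙 _ := rfl
  obtain ⟨z, hz⟩ := Ext.covariant_sequence_exact₂ (residueMod S) s.shortExact
    (x.comp (Ext.mk₀ ι) (add_zero i)) <| by
      rw [Ext.comp_assoc_of_third_deg_zero, Ext.mk₀_comp_mk₀]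
      exact (congrArg (fun ψ ↦ x.comp (Ext.mk₀ ψ) (add_zero i)) hιφ).trans
        (comp_mk₀_smul_id_eq_zero hr x)
  rw [Subsingleton.elim (α := Ext (residueMod S) (.of S (smulPullback π r)) i) z 0,
    Ext.zero_comp] at hz
  rw [← Ext.comp_mk₀_id x, ← hιρ, ← Ext.mk₀_comp_mk₀, ← Ext.comp_assoc_of_third_deg_zero, ← hz,
    Ext.zero_comp]

end Depth

section QuotientsAndSyzygyPreimages
open scoped Pointwise

variable {R : Type u} [CommRing R] {𝒳 : Set (ModuleCat.{u} R)}
  {A B C E : Type u} [AddCommGroup A] [Module R A] [AddCommGroup B] [Module R B]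
  [AddCommGroup C] [Module R C] [AddCommGroup E] [Module R E]
  {f : A →ₗ[R] B} {g : B →ₗ[R] C} {I : Ideal R} {y : R}

theorem IsSES.mkQ_range (hf : Function.Injective f) : IsSES f (LinearMap.range f).mkQ :=
  ⟨hf, Submodule.mkQ_surjective _, by simp⟩

theorem IsSES.not_injective [Nontrivial A] (s : IsSES f g) : ¬ Function.Injective g := fun hg ↦ by
  obtain ⟨a, ha⟩ := exists_ne (0 : A)
  exact ha (s.injective (hg (by simp [s.apply_apply_eq_zero])))

theorem IsSES.exists_desc (s : IsSES f g) (u : B →ₗ[R] E) (hu : ∀ a, u (f a) = 0) :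
    ∃ v : C →ₗ[R] E, ∀ b, v (g b) = u b := by
  have hker : LinearMap.ker g ≤ LinearMap.ker u := by
    rw [← s.2.2]
    rintro _ ⟨a, rfl⟩
    exact hu a
  exact ⟨(LinearMap.ker g).liftQ u hker ∘ₗ (g.quotKerEquivOfSurjective s.surjective).symm,
    fun b ↦ by simp⟩

theorem IsResolving.annihilator_mul_factorIdeal_le (h : IsResolving R 𝒳) (s : IsSES f g) :
    Module.annihilator R A * h.factorIdeal B ≤ h.factorIdeal C := by
  rw [Ideal.mul_le]
  rintro r hr r' ⟨X, i, j, hX, hij⟩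
  obtain ⟨v, hv⟩ := s.exists_desc (r • LinearMap.id) fun a ↦ by
    simp [← map_smul, Module.mem_annihilator.1 hr a]
  refine h.mem_factorIdeal_of_comp_eq hX (i ∘ₗ v) (g ∘ₗ j) fun c ↦ ?_
  obtain ⟨b, rfl⟩ := s.surjective c
  simp [hv, hij, mul_smul, smul_comm r r']

theorem finite_induction_on_proper_quotients [IsNoetherianRing R] {P : ModuleCat.{u} R → Prop}
    (ih : ∀ (M : Type u) [AddCommGroup M] [Module R M] [Module.Finite R M],
      (∀ (Q : Type u) [AddCommGroup Q] [Module R Q] (q : M →ₗ[R] Q), Function.Surjective q →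
        ¬ Function.Injective q → P (.of R Q)) → P (.of R M))
    (M : Type u) [AddCommGroup M] [Module R M] [Module.Finite R M] : P (.of R M) := by
  suffices ∀ (D : Submodule R M) (N : Type u) [AddCommGroup N] [Module R N] (p : M →ₗ[R] N),
      Function.Surjective p → LinearMap.ker p = D → P (.of R N) from
    this _ M .id Function.surjective_id rfl
  intro D
  induction D using IsNoetherian.induction with
  | hgt D ihD =>
    intro N _ _ p hp hpD
    have : Module.Finite R N := .of_surjective p hp
    refine ih N fun Q _ _ q hq hq' ↦ ihD _ ?_ Q (q ∘ₗ p) (hq.comp hp) rfl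
    refine hpD ▸ lt_of_le_not_ge (LinearMap.ker_le_ker_comp p q) fun hle ↦ hq' ?_
    refine (injective_iff_map_eq_zero q).2 fun x hx ↦ ?_
    obtain ⟨m, rfl⟩ := hp x
    exact hle hx

namespace IsResolving

theorem exists_pow_mem_iterSyzygyPreimage_smulFactorable (h : IsResolving R 𝒳) (hy : y ∈ I)
    (j : ℕ) (E : Type u) [AddCommGroup E] [Module R E]
    (hE : ModuleCat.of R E ∈ iterSyzygyPreimage (projectiveAwayFrom I) j) :
    ∃ a : ℕ, ModuleCat.of R E ∈
      iterSyzygyPreimage (h.smulFactorable (y ^ (a + 1))) j := by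
  induction j generalizing E with
  | zero =>
    obtain ⟨hfin, hI⟩ := hE
    obtain ⟨a, ha⟩ := hI hy
    refine ⟨a, hfin, factorIdeal_mono isResolving_finiteProjectives h h.finiteProjectives_subset ?_⟩
    exact pow_succ' y a ▸ Ideal.mul_mem_left _ y ha
  | succ j ih =>
    obtain ⟨hfin, K, P, k, p, hP, hP', s, hK⟩ := hE
    obtain ⟨a, ha⟩ := ih K hK
    exact ⟨a, hfin, K, P, k, p, hP, hP', s, ha⟩

variable [IsNoetherianRing R]

theorem quotSMulTop_mem_syzygyPreimage (h : IsResolving R 𝒳) (hy : IsSMulRegular E y)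
    (hE : ModuleCat.of R E ∈ 𝒳) : ModuleCat.of R (QuotSMulTop y E) ∈ syzygyPreimage 𝒳 := by
  have := h.finite hE
  obtain ⟨n, p, hp⟩ := Module.Finite.exists_fin' R E
  exact (isSES_smulPullback_smul_top hp hy).mem_syzygyPreimage (h.smulPullback_mem hp y hE)

theorem mem_iterSyzygyPreimage_of_quotSMulTop_mem (h : IsResolving R 𝒳) {j : ℕ}
    (hy : IsSMulRegular E y)
    (hE : ModuleCat.of R E ∈ iterSyzygyPreimage (h.smulFactorable y) j)
    (hq : ModuleCat.of R (QuotSMulTop y E) ∈ iterSyzygyPreimage 𝒳 (j + 1)) :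
    ModuleCat.of R E ∈ iterSyzygyPreimage 𝒳 j :=
  h.mem_iterSyzygyPreimage_of_smulPullback_mem j E hE fun _ _ _ _ _ _ hπ ↦
    (h.iterSyzygyPreimage j).mem_kernel_of_projective (isSES_smulPullback_smul_top hπ hy) hq

end IsResolving

theorem IsSES.mem_iterSyzygyPreimage_projectiveAwayFrom [IsNoetherianRing R] (s : IsSES f g)
    (hI : I ≤ Module.annihilator R A) (j : ℕ)
    (hB : ModuleCat.of R B ∈ iterSyzygyPreimage (projectiveAwayFrom I) j) :
    ModuleCat.of R C ∈ iterSyzygyPreimage (projectiveAwayFrom I) j := by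
  have h := isResolving_projectiveAwayFrom I
  have := (h.iterSyzygyPreimage j).finite hB
  have hPR := isResolving_finiteProjectives (R := R)
  cases j with
  | zero =>
    refine ⟨.of_surjective g s.surjective, ?_⟩
    refine le_trans ?_ (Ideal.radical_mono (hPR.annihilator_mul_factorIdeal_le s))
    rw [Ideal.radical_mul]
    exact le_inf (hI.trans Ideal.le_radical) hB.2
  | succ j =>
    have hA : ModuleCat.of R A ∈ projectiveAwayFrom I :=
      ⟨.of_injective f s.injective,
        (hI.trans hPR.annihilator_le_factorIdeal).trans Ideal.le_radical⟩
    obtain ⟨n, p, hp⟩ := Module.Finite.exists_fin' R B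
    obtain ⟨u, v, s'⟩ := s.exists_ker_comp hp
    have hgp : Function.Surjective (g ∘ₗ p) := s.surjective.comp hp
    refine (IsSES.subtype_ker hgp).mem_syzygyPreimage
      ((h.iterSyzygyPreimage j).mem_middle s' ?_ (h.monotone_iterSyzygyPreimage j.zero_le hA))
    exact (h.iterSyzygyPreimage j).mem_kernel_of_projective (.subtype_ker hp) hB

end QuotientsAndSyzygyPreimages

section LocalRing
open scoped Pointwise
open IsLocalRing

/-- The finitely generated modules over a local ring that are free on the punctured spectrum. -/
abbrev puncturedProjectives (S : Type u) [CommRing S] [IsLocalRing S] : Set (ModuleCat.{u} S) :=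
  projectiveAwayFrom (maximalIdeal S)

variable {S : Type u} [CommRing S] [IsLocalRing S]
  {𝒴 : Set (ModuleCat.{u} S)} {Y : Type u} [AddCommGroup Y] [Module S Y]

theorem exists_isSMulRegular_of_depth_ne_zero (h : depth S Y ≠ 0) :
    ∃ y ∈ maximalIdeal S, IsSMulRegular Y y := by
  simpa using mt depthE_eq_zero_iff.2 h

variable [IsNoetherianRing S]

theorem isResolving_puncturedProjectives : IsResolving S (puncturedProjectives S) :=
  isResolving_projectiveAwayFrom _

namespace IsResolving

theorem mem_of_residueField_mem (h : IsResolving S 𝒴) {j : ℕ}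
    (hY : ModuleCat.of S Y ∈ iterSyzygyPreimage (puncturedProjectives S) j)
    (hk : residueMod S ∈ iterSyzygyPreimage 𝒴 j) :
    ModuleCat.of S Y ∈ iterSyzygyPreimage 𝒴 j := by
  have hLF := isResolving_puncturedProjectives (S := S)
  have := (hLF.iterSyzygyPreimage j).finite hY
  revert j
  refine finite_induction_on_proper_quotients (P := fun M ↦ ∀ {j : ℕ},
    M ∈ iterSyzygyPreimage (puncturedProjectives S) j →
    residueMod S ∈ iterSyzygyPreimage 𝒴 j →
    M ∈ iterSyzygyPreimage 𝒴 j) ?_ Y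
  intro E _ _ _ ih j hE hk
  rcases subsingleton_or_nontrivial E with _ | _
  · exact (h.iterSyzygyPreimage j).mem_of_projective
  by_cases hd : depth S E = 0
  · obtain ⟨f, hf⟩ := exists_injective_residueField_of_depth_eq_zero hd
    have s := IsSES.mkQ_range hf
    refine (h.iterSyzygyPreimage j).mem_middle s hk (ih _ _ s.surjective s.not_injective ?_ hk)
    exact s.mem_iterSyzygyPreimage_projectiveAwayFrom annihilator_residueField.ge j hE
  · obtain ⟨y, hym, hy⟩ := exists_isSMulRegular_of_depth_ne_zero hd
    obtain ⟨a, ha⟩ := h.exists_pow_mem_iterSyzygyPreimage_smulFactorable hym j E hE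
    have hya := hy.pow (a + 1)
    have s := isSES_smul_mkQ hya
    refine h.mem_iterSyzygyPreimage_of_quotSMulTop_mem hya ha
      (ih _ _ s.surjective s.not_injective ?_ (h.monotone_iterSyzygyPreimage j.le_succ hk))
    exact (hLF.iterSyzygyPreimage j).quotSMulTop_mem_syzygyPreimage hya hE

theorem mem_of_natCast_le_depth (h : IsResolving S 𝒴) (t j : ℕ) (C : Type u) [AddCommGroup C]
    [Module S C]
    (hC : ModuleCat.of S C ∈ iterSyzygyPreimage (puncturedProjectives S) j)
    (ht : t ≤ depth S C)
    (hk : residueMod S ∈ iterSyzygyPreimage 𝒴 (j + t)) :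
    ModuleCat.of S C ∈ iterSyzygyPreimage 𝒴 j := by
  induction t generalizing j C with
  | zero => exact h.mem_of_residueField_mem hC hk
  | succ t ih =>
    have hLF := (isResolving_puncturedProjectives (S := S)).iterSyzygyPreimage j
    have := hLF.finite hC
    push_cast at ht
    obtain ⟨y, hym, hy⟩ := exists_isSMulRegular_of_depth_ne_zero
      (fun h0 ↦ by simp [h0] at ht : depth S C ≠ 0)
    obtain ⟨a, ha⟩ := h.exists_pow_mem_iterSyzygyPreimage_smulFactorable hym j C hC
    have hya := hy.pow (a + 1)
    rw [← depth_quotSMulTop_add_one (Ideal.pow_mem_of_mem _ hym _ a.succ_pos) hya,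
      ENat.add_le_add_iff_right ENat.one_ne_top] at ht
    refine h.mem_iterSyzygyPreimage_of_quotSMulTop_mem hya ha (ih (j + 1) _ ?_ ht ?_)
    · exact hLF.quotSMulTop_mem_syzygyPreimage hya hC
    · rwa [show j + 1 + t = j + (t + 1) by ring]

theorem residueField_mem_of_depth_eq (h : IsResolving S 𝒴) (t j : ℕ) (C : Type u) [AddCommGroup C]
    [Module S C]
    (hC : ModuleCat.of S C ∈ iterSyzygyPreimage (puncturedProjectives S) j)
    (hC' : ModuleCat.of S C ∈ iterSyzygyPreimage 𝒴 j) (ht : depth S C = t)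
    (hk : residueMod S ∈ iterSyzygyPreimage 𝒴 (j + t + 1)) :
    residueMod S ∈ iterSyzygyPreimage 𝒴 (j + t) := by
  have hLF := isResolving_puncturedProjectives (S := S)
  have := (hLF.iterSyzygyPreimage j).finite hC
  induction t generalizing j C with
  | zero =>
    obtain ⟨f, hf⟩ := exists_injective_residueField_of_depth_eq_zero ht
    have s := IsSES.mkQ_range hf
    refine (h.iterSyzygyPreimage j).mem_kernel s hC' (h.mem_of_residueField_mem ?_ hk)
    exact hLF.monotone_iterSyzygyPreimage j.le_succ
      (s.mem_iterSyzygyPreimage_projectiveAwayFrom annihilator_residueField.ge j hC)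
  | succ t ih =>
    obtain ⟨y, hym, hy⟩ := exists_isSMulRegular_of_depth_ne_zero (ht.trans_ne (by simp))
    have hquot : depth S (QuotSMulTop y C) = t :=
      WithTop.add_right_cancel ENat.one_ne_top ((depth_quotSMulTop_add_one hym hy).trans ht)
    rw [show j + (t + 1) = j + 1 + t by ring] at hk ⊢
    exact ih (j + 1) _ ((hLF.iterSyzygyPreimage j).quotSMulTop_mem_syzygyPreimage hy hC)
      ((h.iterSyzygyPreimage j).quotSMulTop_mem_syzygyPreimage hy hC') hquot hk inferInstance

theorem exists_puncturedProjective_depth_le (h : IsResolving S 𝒴) (hY : ModuleCat.of S Y ∈ 𝒴) :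
    ∃ Z : ModuleCat.{u} S, Z ∈ 𝒴 ∧ Z ∈ puncturedProjectives S ∧ depth S Z ≤ depth S Y := by
  obtain ⟨I, hI⟩ : ∃ I, (stableAnnihilator S Y).radical = I := ⟨_, rfl⟩
  induction I using IsNoetherian.induction generalizing Y with
  | hgt I ih =>
    have := h.finite hY
    by_cases hm : maximalIdeal S ≤ (stableAnnihilator S Y).radical
    · exact ⟨.of S Y, hY, ⟨this, hm⟩, le_rfl⟩
    obtain ⟨r, hrm, hr⟩ := SetLike.not_le_iff_exists.1 hm
    obtain ⟨n, π, hπ⟩ := Module.Finite.exists_fin' S Y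
    obtain ⟨hle, hr'⟩ := sup_le_iff.1 (stableAnnihilator_sup_le_radical_smulPullback hπ r)
    rw [Ideal.span_singleton_le_iff_mem] at hr'
    have hlt : I < (stableAnnihilator S (smulPullback π r)).radical :=
      hI ▸ SetLike.lt_iff_le_and_exists.2 ⟨Ideal.radical_le_radical_iff.2 hle, r, hr', hr⟩
    obtain ⟨Z, hZ, hZ', hd⟩ := ih _ hlt (h.smulPullback_mem hπ r hY) rfl
    exact ⟨Z, hZ, hZ', hd.trans (depth_smulPullback_le hπ hrm)⟩

theorem residueField_mem_of_mem (h : IsResolving S 𝒴) (hY : ModuleCat.of S Y ∈ 𝒴)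
    (hY' : ModuleCat.of S Y ∈ puncturedProjectives S) {t : ℕ} (ht : depth S Y = t) (j : ℕ)
    (hk : residueMod S ∈ iterSyzygyPreimage 𝒴 (j + t)) :
    residueMod S ∈ iterSyzygyPreimage 𝒴 t := by
  induction j with
  | zero => rwa [zero_add] at hk
  | succ j ih =>
    refine ih (h.residueField_mem_of_depth_eq t j Y ?_ ?_ ht (by rwa [add_right_comm]))
    · exact isResolving_puncturedProjectives.monotone_iterSyzygyPreimage j.zero_le hY'
    · exact h.monotone_iterSyzygyPreimage j.zero_le hY

theorem mem_of_iInf_depth_le (h : IsResolving S 𝒴) {n : ℕ}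
    (hk : residueMod S ∈ iterSyzygyPreimage 𝒴 n)
    (hY : ModuleCat.of S Y ∈ puncturedProjectives S)
    (hd : (⨅ X ∈ 𝒴, depth S X) ≤ depth S Y) : ModuleCat.of S Y ∈ 𝒴 := by
  suffices ∃ t : ℕ, t ≤ depth S Y ∧ residueMod S ∈ iterSyzygyPreimage 𝒴 t by
    obtain ⟨t, ht, hkt⟩ := this
    exact h.mem_of_natCast_le_depth t 0 Y hY ht (by rwa [zero_add])
  by_cases htop : depth S Y = ⊤
  · exact ⟨n, by simp [htop], hk⟩
  obtain ⟨X, hX, hXd⟩ : ∃ X ∈ 𝒴, depth S X ≤ depth S Y := by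
    obtain ⟨X, hX⟩ := iInf_lt_iff.1 (hd.trans_lt ((ENat.lt_add_one_iff htop).2 le_rfl))
    obtain ⟨hX, hlt⟩ := iInf_lt_iff.1 hX
    exact ⟨X, hX, (ENat.lt_add_one_iff htop).1 hlt⟩
  obtain ⟨Z, hZ, hZ', hZd⟩ := h.exists_puncturedProjective_depth_le hX
  obtain ⟨t, ht⟩ := ENat.ne_top_iff_exists.1 (ne_top_of_le_ne_top htop (hZd.trans hXd))
  refine ⟨t, ht ▸ hZd.trans hXd, h.residueField_mem_of_mem hZ hZ' ht.symm n ?_⟩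
  exact h.monotone_iterSyzygyPreimage (n.le_add_right t) hk

end IsResolving

end LocalRing

section LocalizedModules

variable {R : Type u} [CommRing R] {W : Submonoid R}
  {A B C : Type u} [AddCommGroup A] [Module R A] [AddCommGroup B] [Module R B]
  [AddCommGroup C] [Module R C]

theorem IsSES.localizedModule {f : A →ₗ[R] B} {g : B →ₗ[R] C} (s : IsSES f g)
    (W : Submonoid R) : IsSES (LocalizedModule.map W f) (LocalizedModule.map W g) :=
  .of_exact (LocalizedModule.map_injective W f s.injective)
    (LocalizedModule.map_surjective W g s.surjective) (LocalizedModule.map_exact W f g s.exact)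

theorem localizedModule_map_map_apply {i : A →ₗ[R] B} {j : B →ₗ[R] A} {r : R}
    (hij : ∀ a, j (i a) = r • a) (a : LocalizedModule W A) :
    LocalizedModule.map W j (LocalizedModule.map W i a) = algebraMap R (Localization W) r • a := by
  induction a using LocalizedModule.induction_on with
  | h a w => rw [LocalizedModule.map_mk, LocalizedModule.map_mk, hij, algebraMap_smul,
      LocalizedModule.smul'_mk]

end LocalizedModules

section Localization

variable {R : Type u} [CommRing R] {𝒳 : Set (ModuleCat.{u} R)} {W : Submonoid R}
  {M : Type u} [AddCommGroup M] [Module R M]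

/-- The closure `add 𝒳_W` of the localizations at `W` of the members of `𝒳` under direct summands;
finite sums need not be added when `𝒳` itself is closed under them. -/
def addLocalization (𝒳 : Set (ModuleCat.{u} R)) (W : Submonoid R) :
    Set (ModuleCat.{u} (Localization W)) :=
  {N | ∃ X ∈ 𝒳, ∃ (i : N →ₗ[Localization W] LocalizedModule W X)
    (ρ : LocalizedModule W X →ₗ[Localization W] N), ∀ a, ρ (i a) = a}

theorem localizedModule_mem_addLocalization {X : ModuleCat.{u} R} (hX : X ∈ 𝒳) :
    ModuleCat.of _ (LocalizedModule W X) ∈ addLocalization 𝒳 W :=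
  ⟨X, hX, .id, .id, fun _ ↦ rfl⟩

section

variable {N N' : Type u} [AddCommGroup N] [Module (Localization W) N]
  [AddCommGroup N'] [Module (Localization W) N']

theorem mem_addLocalization_of_retract {i : N →ₗ[Localization W] N'}
    {ρ : N' →ₗ[Localization W] N} (hi : ∀ a, ρ (i a) = a)
    (hN' : ModuleCat.of _ N' ∈ addLocalization 𝒳 W) : ModuleCat.of _ N ∈ addLocalization 𝒳 W := by
  obtain ⟨X, hX, i', ρ', hi'⟩ := hN'
  exact ⟨X, hX, i' ∘ₗ i, ρ ∘ₗ ρ', fun a ↦ by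
    rw [LinearMap.comp_apply, LinearMap.comp_apply, hi', hi]⟩

theorem IsResolving.finite_of_mem_addLocalization (h : IsResolving R 𝒳)
    (hN : ModuleCat.of _ N ∈ addLocalization 𝒳 W) : Module.Finite (Localization W) N := by
  obtain ⟨X, hX, i, ρ, hi⟩ := hN
  have := h.fg X hX
  exact .of_surjective ρ fun a ↦ ⟨_, hi a⟩

variable [Module R N] [IsScalarTower R (Localization W) N]

theorem IsResolving.mem_addLocalization_of_mem_saturation (h : IsResolving R 𝒳)
    (φ : M →ₗ[R] N) [IsLocalizedModule W φ] (hM : ModuleCat.of R M ∈ h.saturation W) :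
    ModuleCat.of _ N ∈ addLocalization 𝒳 W := by
  obtain ⟨-, r, hr, X, i, j, hX, hij⟩ := hM
  let e : LocalizedModule W M ≃ₗ[Localization W] N :=
    LinearEquiv.extendScalarsOfIsLocalization W _ (IsLocalizedModule.iso W φ)
  obtain ⟨c, hc⟩ := IsLocalization.map_units (Localization W) (⟨r, hr⟩ : W)
  refine mem_addLocalization_of_retract (i := e.symm.toLinearMap) (ρ := e.toLinearMap)
    e.apply_symm_apply ⟨X, hX, LocalizedModule.map W i,
      (↑c⁻¹ : Localization W) • LocalizedModule.map W j, fun a ↦ ?_⟩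
  rw [LinearMap.smul_apply, localizedModule_map_map_apply hij, ← hc, smul_smul, c.inv_mul, one_smul]

theorem IsResolving.mem_saturation_of_mem_addLocalization [IsNoetherianRing R]
    (h : IsResolving R 𝒳) [Module.Finite R M] (φ : M →ₗ[R] N) [IsLocalizedModule W φ]
    (hN : ModuleCat.of _ N ∈ addLocalization 𝒳 W) : ModuleCat.of R M ∈ h.saturation W := by
  obtain ⟨X, hX, i, ρ, hi⟩ := hN
  have := h.fg X hX
  have := Module.finitePresentation_of_finite R M
  have := Module.finitePresentation_of_finite R X
  let ι := LocalizedModule.mkLinearMap W X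
  obtain ⟨u, s, hu⟩ := Module.FinitePresentation.exists_lift_of_isLocalizedModule W ι
    (i.restrictScalars R ∘ₗ φ)
  obtain ⟨v, s', hv⟩ := Module.FinitePresentation.exists_lift_of_isLocalizedModule W φ
    (ρ.restrictScalars R ∘ₗ ι)
  have hvu : φ ∘ₗ v ∘ₗ u = φ ∘ₗ ((s' * s : W) • LinearMap.id) := by
    ext m
    have hum : ι (u m) = s • i (φ m) := LinearMap.congr_fun hu m
    have hvm : φ (v (u m)) = s' • ρ (ι (u m)) := LinearMap.congr_fun hv (u m)
    have hρ : ρ (s • i (φ m)) = s • ρ (i (φ m)) := (ρ.restrictScalars R).map_smul s.1 _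
    have hφ : φ ((s' * s : W) • m) = (s' * s : W) • φ m := φ.map_smul (s' * s).1 m
    exact hvm.trans (by rw [hum, hρ, hi, smul_smul]; exact hφ.symm)
  obtain ⟨t, ht⟩ := Module.Finite.exists_smul_of_comp_eq_of_isLocalizedModule W φ _ _ hvu
  refine ⟨‹_›, _, (t * (s' * s)).2, X, u, t • v, hX, fun m ↦ ?_⟩
  exact (LinearMap.congr_fun ht m).trans (smul_smul (t : R) _ _)

theorem IsResolving.mem_saturation_iff_mem_addLocalization [IsNoetherianRing R]
    (h : IsResolving R 𝒳) [Module.Finite R M] (φ : M →ₗ[R] N) [IsLocalizedModule W φ] :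
    ModuleCat.of R M ∈ h.saturation W ↔ ModuleCat.of _ N ∈ addLocalization 𝒳 W :=
  ⟨h.mem_addLocalization_of_mem_saturation φ, h.mem_saturation_of_mem_addLocalization φ⟩

theorem isLocalizedModule_subtype {L : Submodule R N} (hL : ∀ x, ∃ t : W, t • x ∈ L) :
    IsLocalizedModule W L.subtype where
  map_units := (isLocalizedModule_id W N (Localization W)).map_units
  surj x := (hL x).elim fun t ht ↦ ⟨(⟨_, ht⟩, t), rfl⟩
  exists_of_eq h := ⟨1, by rw [Subtype.ext h]⟩

theorem exists_fg_submodule_forall_smul_mem [Module.Finite (Localization W) N] :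
    ∃ L : Submodule R N, L.FG ∧ ∀ x, ∃ t : W, t • x ∈ L := by
  obtain ⟨s, hs⟩ := Module.Finite.fg_top (R := Localization W) (M := N)
  refine ⟨Submodule.span R s, ⟨s, rfl⟩, fun x ↦ ?_⟩
  exact multiple_mem_span_of_mem_localization_span W (Localization W) (s : Set N) x (by simp [hs])

end

section

variable {A B C : Type u} [AddCommGroup A] [Module (Localization W) A]
  [AddCommGroup B] [Module (Localization W) B] [AddCommGroup C] [Module (Localization W) C]
  {f : A →ₗ[Localization W] B} {g : B →ₗ[Localization W] C}

/-- The sequence over `R` is the restriction of the given one to a finitely generated `R`-submodule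
whose localization is `B`. -/
theorem IsResolving.exists_isSES_mem_saturation_iff [IsNoetherianRing R] (h : IsResolving R 𝒳)
    [Module.Finite (Localization W) B] (s : IsSES f g) :
    ∃ (A' B' C' : ModuleCat.{u} R) (f' : A' →ₗ[R] B') (g' : B' →ₗ[R] C'), IsSES f' g' ∧
      (A' ∈ h.saturation W ↔ ModuleCat.of _ A ∈ addLocalization 𝒳 W) ∧
      (B' ∈ h.saturation W ↔ ModuleCat.of _ B ∈ addLocalization 𝒳 W) ∧
      (C' ∈ h.saturation W ↔ ModuleCat.of _ C ∈ addLocalization 𝒳 W) := by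
  let _ : Module R A := .compHom A (algebraMap R (Localization W))
  let _ : Module R B := .compHom B (algebraMap R (Localization W))
  let _ : Module R C := .compHom C (algebraMap R (Localization W))
  have : IsScalarTower R (Localization W) A := .of_algebraMap_smul fun _ _ ↦ rfl
  have : IsScalarTower R (Localization W) B := .of_algebraMap_smul fun _ _ ↦ rfl
  have : IsScalarTower R (Localization W) C := .of_algebraMap_smul fun _ _ ↦ rfl
  obtain ⟨L, hL, hWL⟩ := exists_fg_submodule_forall_smul_mem (R := R) (W := W) (N := B)
  let f₀ := f.restrictScalars R
  let g₀ := g.restrictScalars R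
  have s₀ : IsSES f₀ g₀ := .of_exact s.injective s.surjective s.exact
  obtain ⟨f', g', s'⟩ := s₀.exists_restrict L
  have : Module.Finite R L := .of_fg hL
  have : Module.Finite R (L.comap f₀) := .of_injective f' s'.injective
  have : Module.Finite R (L.map g₀) := .of_surjective g' s'.surjective
  have := isLocalizedModule_subtype hWL
  have : IsLocalizedModule W (L.comap f₀).subtype := isLocalizedModule_subtype fun x ↦
    (hWL (f x)).imp fun t ht ↦ by rwa [Submodule.mem_comap, Submonoid.smul_def, map_smul]
  have : IsLocalizedModule W (L.map g₀).subtype := isLocalizedModule_subtype fun x ↦ by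
    obtain ⟨b, rfl⟩ := s.surjective x
    exact (hWL b).imp fun t ht ↦ ⟨_, ht, g₀.map_smul t.1 b⟩
  exact ⟨_, _, _, f', g', s', h.mem_saturation_iff_mem_addLocalization (L.comap f₀).subtype,
    h.mem_saturation_iff_mem_addLocalization L.subtype,
    h.mem_saturation_iff_mem_addLocalization (L.map g₀).subtype⟩

theorem IsResolving.mem_addLocalization_of_projective (h : IsResolving R 𝒳)
    [Module.Finite (Localization W) A] [Module.Projective (Localization W) A] :
    ModuleCat.of _ A ∈ addLocalization 𝒳 W := by
  obtain ⟨n, g, hg⟩ := Module.Finite.exists_fin' (Localization W) A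
  obtain ⟨t, ht⟩ := Module.projective_lifting_property g .id hg
  have e : LocalizedModule W (Fin n → R) ≃ₗ[Localization W] Fin n → Localization W :=
    LinearEquiv.extendScalarsOfIsLocalization W _ <| IsLocalizedModule.iso W <|
      LinearMap.pi fun i ↦ Algebra.linearMap R (Localization W) ∘ₗ LinearMap.proj i
  exact mem_addLocalization_of_retract (LinearMap.congr_fun ht)
    ⟨.of R (Fin n → R), h.mem_of_projective, e.symm, e, e.apply_symm_apply⟩

protected theorem IsResolving.addLocalization [IsNoetherianRing R] (h : IsResolving R 𝒳)
    (W : Submonoid R) : IsResolving (Localization W) (addLocalization 𝒳 W) := by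
  have hsat := h.isResolving_saturation W
  refine .of_retract_closed (fun A _ _ hA ↦ h.finite_of_mem_addLocalization hA)
    (fun A B _ _ _ _ i ρ hi hB ↦ mem_addLocalization_of_retract hi hB)
    (fun A _ _ _ _ ↦ h.mem_addLocalization_of_projective) ?_ ?_
  · intro A B C _ _ _ _ _ _ f g s hA hC
    have := s.finite_middle (h.finite_of_mem_addLocalization hA)
      (h.finite_of_mem_addLocalization hC)
    obtain ⟨A', B', C', f', g', s', hA', hB', hC'⟩ := h.exists_isSES_mem_saturation_iff s
    exact hB'.1 (hsat.mem_middle s' (hA'.2 hA) (hC'.2 hC))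
  · intro A B C _ _ _ _ _ _ _ _ _ f g s hC
    obtain ⟨A', B', C', f', g', s', hA', hB', hC'⟩ := h.exists_isSES_mem_saturation_iff s
    exact hA'.1 (hsat.mem_kernel s' (hB'.2 h.mem_addLocalization_of_projective)
      (hsat.mem_syzygyPreimage (hC'.2 hC)))

end

theorem map_stableAnnihilator_le (W : Submonoid R) (M : Type u) [AddCommGroup M] [Module R M] :
    (stableAnnihilator R M).map (algebraMap R (Localization W)) ≤
      stableAnnihilator (Localization W) (LocalizedModule W M) := by
  rw [Ideal.map_le_iff_le_comap]
  rintro r ⟨X, i, j, ⟨_, _⟩, hij⟩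
  have : Module.Projective (Localization W) (LocalizedModule W X) :=
    Module.projective_of_isLocalizedModule W (LocalizedModule.mkLinearMap W X)
  exact isResolving_finiteProjectives.mem_factorIdeal_of_comp_eq
    (isResolving_finiteProjectives.mem_of_projective) (LocalizedModule.map W i)
    (LocalizedModule.map W j) (localizedModule_map_map_apply hij)

theorem localizedModule_mem_puncturedProjectives {I p : Ideal R} [p.IsPrime]
    (hp : p ∈ I.minimalPrimes) [Module.Finite R M] (hI : I ≤ (stableAnnihilator R M).radical) :
    ModuleCat.of _ (LocalizedModule p.primeCompl M) ∈
      puncturedProjectives (Localization.AtPrime p) := by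
  refine ⟨inferInstanceAs (Module.Finite _ (LocalizedModule p.primeCompl M)), ?_⟩
  calc IsLocalRing.maximalIdeal (Localization.AtPrime p)
      = (I.map (algebraMap R (Localization.AtPrime p))).radical := by
        rw [IsLocalization.AtPrime.radical_map_of_mem_minimalPrimes _ p I hp,
          IsLocalization.AtPrime.map_eq_maximalIdeal]
    _ ≤ ((stableAnnihilator R M).radical.map (algebraMap R _)).radical :=
        Ideal.radical_mono (Ideal.map_mono hI)
    _ ≤ ((stableAnnihilator R M).map (algebraMap R _)).radical := by
        rw [Ideal.radical_le_radical_iff]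
        exact Ideal.map_radical_le _
    _ ≤ _ := Ideal.radical_mono (map_stableAnnihilator_le _ _)

theorem IsResolving.mem_addLocalization_of_memAddLocal [IsNoetherianRing R] (h : IsResolving R 𝒳)
    {p : PrimeSpectrum R} {N : ModuleCat.{u} (Localization.AtPrime p.asIdeal)}
    (hN : memAddLocal R 𝒳 p N) : N ∈ addLocalization 𝒳 p.asIdeal.primeCompl := by
  obtain ⟨n, X, hX, N', ⟨e⟩⟩ := hN
  have h' := h.addLocalization p.asIdeal.primeCompl
  exact h'.mem_of_prod_mem <| h'.mem_of_equiv e.symm <|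
    h'.pi_mem (fun i ↦ .of _ (LocalizedModule p.asIdeal.primeCompl (X i))) fun i ↦
      localizedModule_mem_addLocalization (hX i)

end Localization

section Globalization

variable {R : Type u} [CommRing R] [IsNoetherianRing R] {𝒳 : Set (ModuleCat.{u} R)}
  {M : Type u} [AddCommGroup M] [Module R M] [Module.Finite R M]

theorem min_localDepth_le_localDepth_smulPullback {F : Type u} [AddCommGroup F] [Module R F]
    [Module.Finite R F] {π : F →ₗ[R] M} (hπ : Function.Surjective π) (r : R)
    (p : PrimeSpectrum R) :
    min (localDepth R p (.of R F)) (localDepth R p (.of R M)) ≤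
      localDepth R p (.of R (smulPullback π r)) := by
  obtain ⟨k, s⟩ := (IsSES.subtype_ker hπ).exists_smulPullback r
  have hker := ((IsSES.subtype_ker hπ).localizedModule p.asIdeal.primeCompl).min_depth_le_depth_left
  have hpb := (s.localizedModule p.asIdeal.primeCompl).min_depth_le_depth_middle
  exact (le_min ((min_le_min_left _ le_self_add).trans hker) (min_le_right _ _)).trans hpb

theorem mem_NF_of_stableAnnihilator_le {p : PrimeSpectrum R}
    (hp : stableAnnihilator R M ≤ p.asIdeal) : p ∈ NF R (.of R M) := by
  intro (_ : Module.Free (Localization.AtPrime p.asIdeal)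
    (LocalizedModule p.asIdeal.primeCompl M))
  obtain ⟨-, r, hr, hrM⟩ := (isResolving_finiteProjectives.mem_saturation_iff_mem_addLocalization
    (LocalizedModule.mkLinearMap p.asIdeal.primeCompl M)).2
      (isResolving_finiteProjectives.mem_addLocalization_of_projective
        (W := p.asIdeal.primeCompl) (A := LocalizedModule p.asIdeal.primeCompl M))
  exact hr (hp hrM)

namespace IsResolving

theorem exists_notMem_mem_factorIdeal (h : IsResolving R 𝒳) {p : PrimeSpectrum R} {I : Ideal R}
    (hp : p.asIdeal ∈ I.minimalPrimes) (hI : I ≤ (stableAnnihilator R M).radical) {n : ℕ}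
    (hk : residueMod (Localization.AtPrime p.asIdeal) ∈
      iterSyzygyPreimage (addLocalization 𝒳 p.asIdeal.primeCompl) n)
    (hd : (⨅ X ∈ 𝒳, localDepth R p X) ≤ localDepth R p (.of R M)) :
    ∃ r ∉ p.asIdeal, r ∈ h.factorIdeal M := by
  have hMp : ModuleCat.of _ (LocalizedModule p.asIdeal.primeCompl M) ∈
      addLocalization 𝒳 p.asIdeal.primeCompl := by
    refine (h.addLocalization _).mem_of_iInf_depth_le hk
      (localizedModule_mem_puncturedProjectives hp hI) (le_trans ?_ hd)
    exact le_iInf₂ fun X hX ↦ iInf₂_le _ (localizedModule_mem_addLocalization hX)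
  exact ((h.mem_saturation_iff_mem_addLocalization
    (LocalizedModule.mkLinearMap p.asIdeal.primeCompl M)).2 hMp).2

theorem mem_of_le_radical_stableAnnihilator (h : IsResolving R 𝒳) (I : Ideal R)
    (hI : I ≤ (stableAnnihilator R M).radical)
    (hk : ∀ p : PrimeSpectrum R, I ≤ p.asIdeal → ∃ n,
      residueMod (Localization.AtPrime p.asIdeal) ∈
        iterSyzygyPreimage (addLocalization 𝒳 p.asIdeal.primeCompl) n)
    (hd : ∀ p : PrimeSpectrum R, I ≤ p.asIdeal →
      (⨅ X ∈ 𝒳, localDepth R p X) ≤ localDepth R p (.of R M)) :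
    ModuleCat.of R M ∈ 𝒳 := by
  induction I using IsNoetherian.induction generalizing M with
  | hgt I ih =>
    by_cases htop : I = ⊤
    · rw [htop, top_le_iff, Ideal.radical_eq_top, factorIdeal_eq_top_iff] at hI
      exact h.finiteProjectives_subset hI
    obtain ⟨p, hp⟩ := Ideal.nonempty_minimalPrimes htop
    have hpI : I ≤ p := hp.1.2
    obtain ⟨n, hn⟩ := hk ⟨p, hp.1.1⟩ hpI
    obtain ⟨r, hrp, hr⟩ := h.exists_notMem_mem_factorIdeal hp hI hn (hd ⟨p, hp.1.1⟩ hpI)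
    obtain ⟨m, π, hπ⟩ := Module.Finite.exists_fin' R M
    obtain ⟨hle, hr'⟩ := sup_le_iff.1 (stableAnnihilator_sup_le_radical_smulPullback hπ r)
    have hlt : I < I ⊔ Ideal.span {r} := by
      simpa [Ideal.span_singleton_le_iff_mem] using fun hrI ↦ hrp (hpI hrI)
    refine h.mem_of_smulPullback_mem hπ hr (ih _ hlt ?_ (fun q hq ↦ hk q (le_sup_left.trans hq))
      fun q hq ↦ ?_)
    · exact sup_le (hI.trans (Ideal.radical_le_radical_iff.2 hle)) hr'
    · exact (le_min (iInf₂_le _ h.mem_of_projective) (hd q (le_sup_left.trans hq))).trans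
        (min_localDepth_le_localDepth_smulPullback hπ r q)

end IsResolving

end Globalization

theorem mem_dominant_resolving_iff_depth_general [IsNoetherianRing R]
    (𝒳 : Set (ModuleCat.{u} R)) (h𝒳 : IsResolving R 𝒳)
    (M : ModuleCat.{u} R) (hM : Module.Finite R M)
    (hdom : DominantOn R 𝒳 (NF R M)) :
    M ∈ 𝒳 ↔ ∀ p ∈ NF R M, (⨅ X ∈ 𝒳, localDepth R p X) ≤ localDepth R p M := by
  refine ⟨fun hMX p _ ↦ iInf₂_le M hMX, fun hd ↦ ?_⟩
  refine h𝒳.mem_of_le_radical_stableAnnihilator (stableAnnihilator R M) Ideal.le_radical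
    (fun p hp ↦ ?_) fun p hp ↦ hd p (mem_NF_of_stableAnnihilator_le hp)
  obtain ⟨n, K, hK, hKX⟩ := hdom p (mem_NF_of_stableAnnihilator_le hp)
  exact ⟨n, hK.mem_iterSyzygyPreimage (h𝒳.addLocalization _)
    (h𝒳.mem_addLocalization_of_memAddLocal hKX)⟩

/-- Theorem (g): over a Cohen-Macaulay ring, a module `M` belongs to a resolving
subcategory `𝒳` which is dominant on `NF(M)` iff
`depth M_p ≥ min_{X ∈ 𝒳} depth X_p` for all `p ∈ NF(M)`. -/
theorem mem_dominant_resolving_iff_depth [IsNoetherianRing R]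
    (hCM : ∀ p : PrimeSpectrum R, IsCMLocalRing (Localization.AtPrime p.asIdeal))
    (𝒳 : Set (ModuleCat.{u} R)) (h𝒳 : IsResolving R 𝒳)
    (M : ModuleCat.{u} R) (hM : Module.Finite R M)
    (hdom : DominantOn R 𝒳 (NF R M)) :
    M ∈ 𝒳 ↔ ∀ p ∈ NF R M, (⨅ X ∈ 𝒳, localDepth R p X) ≤ localDepth R p M := by
  exact mem_dominant_resolving_iff_depth_general R 𝒳 h𝒳 M hM hdom

end ResolvPaper
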